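/- arXiv:2306.08518 — 6 statements merged into one kernel-verified Lean document; each statement's English description precedes it below -/
import Mathlib

section
/- Let ρ ∈ (0,1] and κ ∈ (0,1]. There exist constants C ≥ 1 and θ ∈ (0,1), depending only on ρ and κ, with the following property: for every a ∈ ℝ, every s > 0, every M > 0, every function g : [a, a+s] → ℝ that is infinitely differentiable on [a, a+s] and satisfies |g^{(k)}(x)| ≤ M · k! · (sρ)^{-k} for all x ∈ [a, a+s] and all k ∈ ℕ, and every Lebesgue measurable set F ⊆ [a, a+s] with |F| ≥ κ s, one has sup_{x ∈ [a,a+s]} |g(x)| ≤ C · M^{1-θ} · ( (1/|F|) ∫_F |g(x)| dx )^{θ}. -/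
open MeasureTheory Set

/-!
On an interval that is short compared with the analyticity radius, `g` is approximated by its Taylor
polynomial of degree `n` up to an error that decays geometrically in `n`, at any prescribed rate if
the interval is short enough. By the Remez inequality, which is Lagrange interpolation at `n + 1`
separated points of `E`, a polynomial of degree `n` that is bounded by `B` on a subset `E` of
density `δ` is bounded by `B * (6 / δ) ^ n` on the whole interval. Balancing the two contributions
in `n` turns a bound on `E` into a Hölder-type bound on the interval.

Such bounds compose. Chebyshev's inequality provides half of `F` on which `|g|` is at most twice its
average, the pigeonhole principle a short window in which this half is dense, and from that window
the bound travels to the rest of the interval through a number of adjacent windows controlled by `ρ`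
and `κ` alone.
-/

open Polynomial Real

section Remez

theorem exists_separated_of_le_volume {η : ℝ} (hη : 0 < η) (n : ℕ) {E : Set ℝ}
    (hE : IsCompact E) (hne : E.Nonempty) (hvol : ENNReal.ofReal (n * η) ≤ volume E) :
    ∃ x : ℕ → ℝ, (∀ i ≤ n, x i ∈ E) ∧ ∀ i < n, x i + η ≤ x (i + 1) := by
  induction n generalizing E with
  | zero => exact ⟨fun _ ↦ hne.some, fun _ _ ↦ hne.some_mem, fun i hi ↦ absurd hi i.not_lt_zero⟩
  | succ n ih =>
    set e := sInf E
    set T := E ∩ Ici (e + η)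
    have hvolE : volume E ≤ volume T + ENNReal.ofReal η := calc
      volume E ≤ volume (T ∪ Icc e (e + η)) := measure_mono fun y hy ↦
        (le_total (e + η) y).imp (fun h ↦ ⟨hy, h⟩) fun h ↦ ⟨csInf_le hE.bddBelow hy, h⟩
      _ ≤ volume T + volume (Icc e (e + η)) := measure_union_le _ _
      _ = volume T + ENNReal.ofReal η := by rw [Real.volume_Icc, add_sub_cancel_left]
    have hT_vol : ENNReal.ofReal (n * η) ≤ volume T := by
      refine ENNReal.le_of_add_le_add_right ENNReal.ofReal_ne_top (hvolE.trans' ?_)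
      rwa [← ENNReal.ofReal_add (by positivity) hη.le, ← add_one_mul, ← Nat.cast_succ]
    have hT_ne : T.Nonempty := by
      by_contra hT
      have hmax : sSup E < e + η :=
        not_le.1 fun h ↦ hT ⟨sSup E, hE.sSup_mem hne, h⟩
      have : volume E < ENNReal.ofReal η := calc
        volume E ≤ volume (Icc e (sSup E)) :=
          measure_mono fun y hy ↦ ⟨csInf_le hE.bddBelow hy, le_csSup hE.bddAbove hy⟩
        _ < ENNReal.ofReal η := by
          rw [Real.volume_Icc, ENNReal.ofReal_lt_ofReal_iff hη]
          linarith
      refine this.not_ge (hvol.trans' (ENNReal.ofReal_le_ofReal ?_))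
      exact le_mul_of_one_le_left hη.le (by simp)
    obtain ⟨x, hxT, hx⟩ := ih (hE.inter_right isClosed_Ici) hT_ne hT_vol
    refine ⟨fun i ↦ i.casesOn e x, fun i hi ↦ ?_, fun i hi ↦ ?_⟩
    · cases i with
      | zero => exact hE.sInf_mem hne
      | succ i => exact (hxT i (by lia)).1
    · cases i with
      | zero => exact (hxT 0 n.zero_le).2
      | succ i => exact hx i (by lia)

theorem abs_sub_mul_le_abs_sub_of_separated {x : ℕ → ℝ} {η : ℝ} {n : ℕ}
    (hx : ∀ i < n, x i + η ≤ x (i + 1)) {i j : ℕ} (hi : i ≤ n) (hj : j ≤ n) :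
    |(i : ℝ) - j| * η ≤ |x i - x j| := by
  wlog hij : j ≤ i generalizing i j
  · simpa only [abs_sub_comm] using this hj hi (le_of_not_ge hij)
  rw [abs_of_nonneg (sub_nonneg.2 (Nat.cast_le.2 hij))]
  refine le_trans ?_ (le_abs_self _)
  induction i, hij using Nat.le_induction with
  | base => simp
  | succ i _ ih =>
    have hnext := hx i (by lia)
    have hprev := ih (by lia)
    push_cast
    linarith

theorem prod_erase_range_abs_sub {n i : ℕ} (hi : i ≤ n) :
    ∏ j ∈ (Finset.range (n + 1)).erase i, |(i : ℝ) - j| = i.factorial * (n - i).factorial := by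
  have hsplit : (Finset.range (n + 1)).erase i =
      Finset.range i ∪ Finset.Ico (i + 1) (n + 1) := by
    grind
  have hdisj : Disjoint (Finset.range i) (Finset.Ico (i + 1) (n + 1)) := by
    rw [Finset.disjoint_left]
    grind
  have hbelow : ∏ j ∈ Finset.range i, |(i : ℝ) - j| = i.factorial := by
    rw [← Nat.descFactorial_self, Nat.descFactorial_eq_prod_range, Nat.cast_prod]
    refine Finset.prod_congr rfl fun j hj ↦ ?_
    rw [← Nat.cast_sub (Finset.mem_range.1 hj).le, Nat.abs_cast]
  have habove : ∏ j ∈ Finset.Ico (i + 1) (n + 1), |(i : ℝ) - j| = (n - i).factorial := by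
    rw [← Finset.prod_range_add_one_eq_factorial, Finset.prod_Ico_eq_prod_range, Nat.cast_prod,
      Nat.add_sub_add_right]
    refine Finset.prod_congr rfl fun j _ ↦ ?_
    rw [abs_sub_comm, ← Nat.cast_sub (by lia), Nat.abs_cast]
    congr 1
    lia
  rw [hsplit, Finset.prod_union hdisj, hbelow, habove]

variable {x : ℕ → ℝ} {η u v : ℝ} {n : ℕ}

theorem abs_eval_lagrangeBasis_le_of_separated (hη : 0 < η) (hx : ∀ i < n, x i + η ≤ x (i + 1))
    (hxuv : ∀ i ≤ n, x i ∈ Icc u v) {i : ℕ} (hi : i ≤ n) {y : ℝ} (hy : y ∈ Icc u v) :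
    |(Lagrange.basis (Finset.range (n + 1)) x i).eval y| ≤
      ((v - u) / η) ^ n / n.factorial * n.choose i := by
  have hfactor : ∀ j ∈ (Finset.range (n + 1)).erase i,
      |(Lagrange.basisDivisor (x i) (x j)).eval y| ≤ (v - u) / η * |(i : ℝ) - j|⁻¹ := by
    intro j hj
    obtain ⟨hji, hjn⟩ : j ≠ i ∧ j ≤ n := by
      simpa [Nat.lt_succ_iff] using hj
    have hij : 0 < |(i : ℝ) - j| := abs_pos.2 (sub_ne_zero.2 (Nat.cast_injective.ne hji.symm))
    have hsep := abs_sub_mul_le_abs_sub_of_separated hx hi hjn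
    have hyx : |y - x j| ≤ v - u := abs_sub_le_of_le_of_le hy.1 hy.2 (hxuv j hjn).1 (hxuv j hjn).2
    calc |(Lagrange.basisDivisor (x i) (x j)).eval y| = |x i - x j|⁻¹ * |y - x j| := by
          simp [Lagrange.basisDivisor, abs_mul]
      _ ≤ (|(i : ℝ) - j| * η)⁻¹ * (v - u) := by gcongr
      _ = (v - u) / η * |(i : ℝ) - j|⁻¹ := by rw [mul_inv]; ring
  calc |(Lagrange.basis (Finset.range (n + 1)) x i).eval y|
      ≤ ∏ j ∈ (Finset.range (n + 1)).erase i, (v - u) / η * |(i : ℝ) - j|⁻¹ := by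
        rw [Lagrange.basis, eval_prod, Finset.abs_prod]
        exact Finset.prod_le_prod (fun _ _ ↦ abs_nonneg _) hfactor
    _ = ((v - u) / η) ^ n * (i.factorial * (n - i).factorial : ℝ)⁻¹ := by
        rw [Finset.prod_mul_distrib, Finset.prod_const, Finset.prod_inv_distrib,
          prod_erase_range_abs_sub hi, Finset.card_erase_of_mem (by simpa [Nat.lt_succ_iff]),
          Finset.card_range, Nat.add_sub_cancel]
    _ = ((v - u) / η) ^ n / n.factorial * n.choose i := by
        rw [Nat.cast_choose ℝ hi]
        field_simp

theorem abs_eval_le_of_separated (hη : 0 < η) (hx : ∀ i < n, x i + η ≤ x (i + 1))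
    (hxuv : ∀ i ≤ n, x i ∈ Icc u v) {P : ℝ[X]} (hP : P.natDegree ≤ n) {B : ℝ}
    (hB : ∀ i ≤ n, |P.eval (x i)| ≤ B) {y : ℝ} (hy : y ∈ Icc u v) :
    |P.eval y| ≤ B * ((2 * ((v - u) / η)) ^ n / n.factorial) := by
  have hinj : InjOn x (Finset.range (n + 1)) := fun i hi j hj hij ↦ by
    simp only [Finset.coe_range, mem_Iio, Nat.lt_succ_iff] at hi hj
    have hsep := abs_sub_mul_le_abs_sub_of_separated hx hi hj
    rw [hij, sub_self, abs_zero] at hsep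
    have hij0 : |(i : ℝ) - j| ≤ 0 := nonpos_of_mul_nonpos_left hsep hη
    exact_mod_cast sub_eq_zero.1 (abs_nonpos_iff.1 hij0)
  have hP' : P.degree < (Finset.range (n + 1)).card := by
    rw [Finset.card_range]
    exact degree_lt_iff_coeff_zero _ _ |>.2 fun m hm ↦ coeff_eq_zero_of_natDegree_lt (by lia)
  have hinterp : P.eval y = ∑ i ∈ Finset.range (n + 1),
      P.eval (x i) * (Lagrange.basis (Finset.range (n + 1)) x i).eval y := by
    conv_lhs => rw [Lagrange.eq_interpolate hinj hP', Lagrange.interpolate_apply]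
    simp [eval_finsetSum]
  calc |P.eval y|
      ≤ ∑ i ∈ Finset.range (n + 1),
          |P.eval (x i) * (Lagrange.basis (Finset.range (n + 1)) x i).eval y| :=
        hinterp ▸ Finset.abs_sum_le_sum_abs _ _
    _ ≤ ∑ i ∈ Finset.range (n + 1), B * (((v - u) / η) ^ n / n.factorial * n.choose i) := by
        refine Finset.sum_le_sum fun i hi ↦ ?_
        have hi : i ≤ n := Nat.lt_succ_iff.1 (Finset.mem_range.1 hi)
        rw [abs_mul]
        gcongr
        · exact (abs_nonneg _).trans (hB i hi)
        · exact hB i hi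
        · exact abs_eval_lagrangeBasis_le_of_separated hη hx hxuv hi hy
    _ = B * ((2 * ((v - u) / η)) ^ n / n.factorial) := by
        rw [← Finset.mul_sum, ← Finset.mul_sum, ← Nat.cast_sum, Nat.sum_range_choose, mul_pow]
        push_cast
        ring

theorem remez_inequality {P : ℝ[X]} (hP : P.natDegree ≤ n) {δ B : ℝ}
    (huv : u < v) (hδ : 0 < δ) {E : Set ℝ} (hE : E ⊆ Icc u v)
    (hvol : ENNReal.ofReal (δ * (v - u)) ≤ volume E) (hB : ∀ x ∈ E, |P.eval x| ≤ B)
    {y : ℝ} (hy : y ∈ Icc u v) : |P.eval y| ≤ B * (6 / δ) ^ n := by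
  have huv' : 0 < v - u := sub_pos.2 huv
  set K := closure E
  have hK : K ⊆ Icc u v := isClosed_Icc.closure_subset_iff.2 hE
  have hKvol : ENNReal.ofReal (δ * (v - u)) ≤ volume K := hvol.trans (measure_mono subset_closure)
  have hKne : K.Nonempty :=
    nonempty_of_measure_ne_zero (hKvol.trans_lt' (ENNReal.ofReal_pos.2 (by positivity))).ne'
  have hKB : ∀ x ∈ K, |P.eval x| ≤ B := fun x hx ↦
    closure_minimal hB (isClosed_le P.continuous.abs continuous_const) hx
  rcases n.eq_zero_or_pos with rfl | hn
  · obtain ⟨c, rfl⟩ := natDegree_eq_zero.1 (Nat.le_zero.1 hP)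
    obtain ⟨x, hx⟩ := hKne
    simpa using hKB x hx
  set η := δ * (v - u) / n
  have hη : 0 < η := by positivity
  obtain ⟨x, hxK, hx⟩ := exists_separated_of_le_volume hη n
    (isCompact_Icc.of_isClosed_subset isClosed_closure hK) hKne
    (by rwa [mul_div_cancel₀ _ (by positivity)])
  have hB0 : 0 ≤ B := (abs_nonneg _).trans (hKB _ hKne.some_mem)
  calc |P.eval y| ≤ B * ((2 * ((v - u) / η)) ^ n / n.factorial) :=
        abs_eval_le_of_separated hη hx (fun i hi ↦ hK (hxK i hi)) hP
          (fun i hi ↦ hKB _ (hxK i hi)) hy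
    _ = B * ((2 / δ) ^ n * ((n : ℝ) ^ n / n.factorial)) := by
        rw [show 2 * ((v - u) / η) = 2 / δ * n by simp only [η]; field_simp, mul_pow, mul_div_assoc]
    _ ≤ B * ((2 / δ) ^ n * 3 ^ n) := by
        gcongr
        calc (n : ℝ) ^ n / n.factorial ≤ exp n := pow_div_factorial_le_exp _ n.cast_nonneg n
          _ = exp 1 ^ n := by rw [← exp_nat_mul, mul_one]
          _ ≤ 3 ^ n := by gcongr; exact exp_one_lt_three.le
    _ = B * (6 / δ) ^ n := by
        rw [← mul_pow]
        ring

end Remez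

section CauchyBounds

/-- Quantitative real analyticity: `g` is smooth on `S`, with the derivative bounds
`|g⁽ᵏ⁾| ≤ M k! R⁻ᵏ` that Cauchy's estimates give a function which extends holomorphically, bounded
by `M`, to the disc of radius `R` around each point of `S`. -/
structure HasCauchyBounds (g : ℝ → ℝ) (S : Set ℝ) (M R : ℝ) : Prop where
  contDiffOn : ContDiffOn ℝ (⊤ : ℕ∞) g S
  abs_iteratedDerivWithin_le : ∀ k : ℕ, ∀ x ∈ S,
    |iteratedDerivWithin k g S x| ≤ M * k.factorial * (R ^ k)⁻¹

namespace HasCauchyBounds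

variable {g : ℝ → ℝ} {S T : Set ℝ} {M R : ℝ}

theorem abs_le (hg : HasCauchyBounds g S M R) {x : ℝ} (hx : x ∈ S) : |g x| ≤ M := by
  simpa using hg.abs_iteratedDerivWithin_le 0 x hx

theorem mono (hg : HasCauchyBounds g T M R) (hST : S ⊆ T) (hS : UniqueDiffOn ℝ S)
    (hT : UniqueDiffOn ℝ T) : HasCauchyBounds g S M R where
  contDiffOn := hg.contDiffOn.mono hST
  abs_iteratedDerivWithin_le k x hx := by
    have hgk : ContDiffOn ℝ k g T := hg.contDiffOn.of_le (mod_cast le_top)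
    rw [iteratedDerivWithin, iteratedFDerivWithin_subset hST hS hT hgk hx]
    exact hg.abs_iteratedDerivWithin_le k x (hST hx)

end HasCauchyBounds

theorem exists_polynomial_eval_eq_taylorWithinEval (f : ℝ → ℝ) (n : ℕ) (s : Set ℝ) (x₀ : ℝ) :
    ∃ P : ℝ[X], P.natDegree ≤ n ∧ ∀ y, P.eval y = taylorWithinEval f n s x₀ y := by
  refine ⟨∑ k ∈ Finset.range (n + 1), C (taylorCoeffWithin f k s x₀) * (X - C x₀) ^ k,
    natDegree_sum_le_of_forall_le _ _ fun k hk ↦ ?_, fun y ↦ ?_⟩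
  · refine (natDegree_C_mul_le _ _).trans ?_
    rw [natDegree_pow, natDegree_X_sub_C, mul_one]
    exact Nat.lt_succ_iff.1 (Finset.mem_range.1 hk)
  · rw [taylor_within_apply, eval_finsetSum]
    refine Finset.sum_congr rfl fun k _ ↦ ?_
    simp only [taylorCoeffWithin, smul_eq_mul, eval_mul, eval_C, eval_pow, eval_sub, eval_X]
    ring

namespace HasCauchyBounds

variable {g : ℝ → ℝ} {M R u v : ℝ}

theorem exists_polynomial_approx (hg : HasCauchyBounds g (Icc u v) M R) (hR : 0 < R) (n : ℕ) :
    ∃ P : ℝ[X], P.natDegree ≤ n ∧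
      ∀ y ∈ Icc u v, |g y - P.eval y| ≤ M * ((n + 1) * ((v - u) / R) ^ (n + 1)) := by
  obtain ⟨P, hdeg, hP⟩ := exists_polynomial_eval_eq_taylorWithinEval g n (Icc u v) u
  refine ⟨P, hdeg, fun y hy ↦ ?_⟩
  have hM : 0 ≤ M := (abs_nonneg _).trans (hg.abs_le hy)
  calc |g y - P.eval y|
      ≤ M * (n + 1).factorial * (R ^ (n + 1))⁻¹ * (y - u) ^ (n + 1) / n.factorial := by
        rw [hP]
        exact taylor_mean_remainder_bound (hy.1.trans hy.2)
          (hg.contDiffOn.of_le (mod_cast le_top)) hy (hg.abs_iteratedDerivWithin_le (n + 1))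
    _ ≤ M * (n + 1).factorial * (R ^ (n + 1))⁻¹ * (v - u) ^ (n + 1) / n.factorial := by
        have := sub_nonneg.2 hy.1
        gcongr
        exact hy.2
    _ = M * ((n + 1) * ((v - u) / R) ^ (n + 1)) := by
        rw [Nat.factorial_succ, div_pow]
        push_cast
        field_simp

theorem abs_le_add_of_abs_le (hg : HasCauchyBounds g (Icc u v) M R) (huv : u < v) (hR : 0 < R)
    {δ : ℝ} (hδ : δ ∈ Ioc 0 1) (hlen : v - u ≤ δ / 24 * R) {E : Set ℝ} (hE : E ⊆ Icc u v)
    (hvol : ENNReal.ofReal (δ * (v - u)) ≤ volume E) {A : ℝ} (hA : ∀ x ∈ E, |g x| ≤ A)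
    {y : ℝ} (hy : y ∈ Icc u v) (n : ℕ) :
    |g y| ≤ A * (6 / δ) ^ n + 2 * M * (1 / 2) ^ n := by
  obtain ⟨hδ0, hδ1⟩ := hδ
  have hM : 0 ≤ M := (abs_nonneg _).trans (hg.abs_le hy)
  obtain ⟨P, hdeg, hP⟩ := hg.exists_polynomial_approx hR n
  set ε := M * (δ / 12) ^ n
  have hPε : ∀ z ∈ Icc u v, |g z - P.eval z| ≤ ε := fun z hz ↦ (hP z hz).trans <| by
    have := sub_nonneg.2 huv.le
    refine mul_le_mul_of_nonneg_left ?_ hM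
    calc (n + 1) * ((v - u) / R) ^ (n + 1) ≤ 2 ^ (n + 1) * (δ / 24) ^ (n + 1) := by
          refine mul_le_mul ?_ (pow_le_pow_left₀ (by positivity) ((div_le_iff₀ hR).2 hlen) _)
            (by positivity) (by positivity)
          exact_mod_cast (n + 1).lt_two_pow_self.le
      _ = (δ / 12) ^ (n + 1) := by rw [← mul_pow]; ring
      _ ≤ (δ / 12) ^ n := pow_le_pow_of_le_one (by positivity) (by linarith) n.le_succ
  have hPE : ∀ x ∈ E, |P.eval x| ≤ A + ε := fun x hx ↦ by
    have := abs_sub_abs_le_abs_sub (P.eval x) (g x)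
    rw [abs_sub_comm] at this
    linarith [hPε x (hE hx), hA x hx]
  have hPy : |P.eval y| ≤ (A + ε) * (6 / δ) ^ n :=
    remez_inequality hdeg huv hδ0 hE hvol hPE hy
  have hε_half : ε ≤ M * (1 / 2) ^ n := by
    simp only [ε]
    gcongr
    linarith
  have hε_mul : ε * (6 / δ) ^ n = M * (1 / 2) ^ n := by
    rw [mul_assoc, ← mul_pow]
    congr 2
    field_simp
    norm_num
  have hgy : |g y| ≤ |P.eval y| + ε := by
    linarith [abs_sub_abs_le_abs_sub (g y) (P.eval y), hPε y hy]
  linarith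

end HasCauchyBounds

end CauchyBounds

section PropagatesSmallness

theorem mul_div_rpow_eq {M A : ℝ} (hM : 0 < M) (hA : 0 ≤ A) (θ : ℝ) :
    M * (A / M) ^ θ = M ^ (1 - θ) * A ^ θ := by
  rw [div_rpow hA hM.le, rpow_sub hM, rpow_one]
  ring

theorem logb_two_mem_Ioo {b : ℝ} (hb : 2 < b) : logb b 2 ∈ Ioo 0 1 :=
  ⟨logb_pos (by linarith) one_lt_two,
    (logb_lt_logb (by linarith) two_pos hb).trans_eq (logb_self_eq_one (by linarith))⟩

theorem le_rpow_mul_rpow_of_forall_le_add {K M A z : ℝ} (hK : 1 < K) (hM : 0 < M) (hA : 0 ≤ A)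
    (hzM : z ≤ M) (hz : ∀ n : ℕ, z ≤ A * K ^ n + 2 * M * (1 / 2) ^ n) :
    z ≤ 6 * M ^ (1 - logb (2 * K) 2) * A ^ logb (2 * K) 2 := by
  set θ := logb (2 * K) 2
  have hθ : 0 < θ := (logb_two_mem_Ioo (by linarith)).1
  have h2K : (2 * K) ^ θ = 2 := rpow_logb (by linarith) (by linarith) two_pos
  rcases hA.eq_or_lt with rfl | hA
  · have hlim : Filter.Tendsto (fun n : ℕ ↦ 2 * M * (1 / 2 : ℝ) ^ n) Filter.atTop (nhds 0) := by
      simpa using (tendsto_pow_atTop_nhds_zero_of_lt_one (r := (1 / 2 : ℝ)) (by norm_num)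
        (by norm_num)).const_mul (2 * M)
    simpa [zero_rpow hθ.ne'] using ge_of_tendsto' hlim fun n ↦ by simpa using hz n
  rw [mul_assoc, ← mul_div_rpow_eq hM hA.le]
  rcases le_total M A with hMA | hAM
  · have : 1 ≤ (A / M) ^ θ := one_le_rpow ((one_le_div hM).2 hMA) hθ.le
    nlinarith
  obtain ⟨n, hn, hn'⟩ := exists_nat_pow_near ((one_le_div hA).2 hAM) (by linarith : 1 < 2 * K)
  have hAK : A * K ^ n ≤ M * (1 / 2) ^ n := by
    rw [le_div_iff₀ hA, mul_pow] at hn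
    rw [one_div, inv_pow, ← div_eq_mul_inv, le_div_iff₀ (by positivity)]
    linarith
  have hpow : (1 / 2 : ℝ) ^ (n + 1) ≤ (A / M) ^ θ := calc
    (1 / 2 : ℝ) ^ (n + 1) = (((2 * K) ^ (n + 1))⁻¹) ^ θ := by
      rw [inv_rpow (by positivity), ← rpow_pow_comm (by positivity), h2K, one_div, inv_pow]
    _ ≤ (A / M) ^ θ := by
      rw [← inv_div M A]
      gcongr
  calc z ≤ A * K ^ n + 2 * M * (1 / 2) ^ n := hz n
    _ ≤ 6 * (M * (1 / 2) ^ (n + 1)) := by rw [pow_succ]; linarith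
    _ ≤ 6 * (M * (A / M) ^ θ) := by gcongr

/-- Hölder-type propagation of smallness from `E` to `J` for a function `g` of size `M`: a bound `A`
for `|g|` on `E` yields the bound `C * M ^ (1 - θ) * A ^ θ` on `J`. -/
def PropagatesSmallness {α : Type*} (g : α → ℝ) (M C θ : ℝ) (E J : Set α) : Prop :=
  ∀ A, 0 ≤ A → (∀ x ∈ E, |g x| ≤ A) → ∀ y ∈ J, |g y| ≤ C * M ^ (1 - θ) * A ^ θ

namespace PropagatesSmallness

variable {α : Type*} {g : α → ℝ} {M C C' θ θ' : ℝ} {E E' J J' K : Set α}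

theorem refl (g : α → ℝ) (M : ℝ) (E : Set α) : PropagatesSmallness g M 1 1 E E :=
  fun A _ hA ↦ by simpa using hA

theorem mono (h : PropagatesSmallness g M C θ E J) (hE : E ⊆ E') (hJ : J' ⊆ J) :
    PropagatesSmallness g M C θ E' J' :=
  fun A hA hgA y hy ↦ h A hA (fun x hx ↦ hgA x (hE hx)) y (hJ hy)

theorem trans (h : PropagatesSmallness g M C θ E J) (h' : PropagatesSmallness g M C' θ' J K)
    (hM : 0 < M) (hC : 1 ≤ C) (hC' : 0 ≤ C') (hθ' : θ' ∈ Icc 0 1) :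
    PropagatesSmallness g M (C * C') (θ * θ') E K := by
  intro A hA hgA y hy
  have hC0 : 0 ≤ C := zero_le_one.trans hC
  calc |g y| ≤ C' * M ^ (1 - θ') * (C * M ^ (1 - θ) * A ^ θ) ^ θ' :=
        h' _ (by positivity) (h A hA hgA) y hy
    _ = C ^ θ' * C' * (M ^ (1 - θ') * M ^ ((1 - θ) * θ')) * A ^ (θ * θ') := by
        rw [mul_rpow (by positivity) (by positivity), mul_rpow hC0 (by positivity),
          ← rpow_mul hM.le, ← rpow_mul hA]
        ring
    _ = C ^ θ' * C' * M ^ (1 - θ * θ') * A ^ (θ * θ') := by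
        rw [← rpow_add hM]
        ring_nf
    _ ≤ C * C' * M ^ (1 - θ * θ') * A ^ (θ * θ') := by
        gcongr
        exact rpow_le_self_of_one_le hC hθ'.2

end PropagatesSmallness

theorem exists_mem_Icc_add_sub_div_mem_Icc {p w c x : ℝ} (hw : 0 < w) (hc : 0 < c)
    (hleft : p + w - x ≤ c * w) (hright : x - p ≤ c * w) :
    ∃ q ∈ Icc p (p + w), x - q ≠ 0 ∧ q + (x - q) / c ∈ Icc p (p + w) := by
  have hup : (x - p) / c ≤ w := (div_le_iff₀' hc).2 hright
  have hdown : (p + w - x) / c ≤ w := (div_le_iff₀' hc).2 hleft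
  rcases lt_or_ge x (p + w) with hxp | hxp
  · refine ⟨p + w, right_mem_Icc.2 (by linarith), by linarith, ?_⟩
    have h0 := div_nonneg (sub_nonneg.2 hxp.le) hc.le
    rw [← neg_sub, neg_div]
    exact ⟨by linarith, by linarith⟩
  · have h0 : 0 ≤ (x - p) / c := div_nonneg (by linarith) hc.le
    exact ⟨p, left_mem_Icc.2 (by linarith), by linarith, by linarith, by linarith⟩

namespace HasCauchyBounds

variable {g : ℝ → ℝ} {M R a b : ℝ}

theorem propagatesSmallness_of_short {u v : ℝ} (hg : HasCauchyBounds g (Icc u v) M R)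
    (hM : 0 < M) (hR : 0 < R) (huv : u < v) {δ : ℝ} (hδ : δ ∈ Ioc 0 1)
    (hlen : v - u ≤ δ / 24 * R) {E : Set ℝ} (hE : E ⊆ Icc u v)
    (hvol : ENNReal.ofReal (δ * (v - u)) ≤ volume E) :
    PropagatesSmallness g M 6 (logb (12 / δ) 2) E (Icc u v) := by
  intro A hA hgA y hy
  have hδ6 : 1 < 6 / δ := (one_lt_div hδ.1).2 (by linarith [hδ.2])
  rw [show 12 / δ = 2 * (6 / δ) by ring]
  exact le_rpow_mul_rpow_of_forall_le_add hδ6 hM hA (hg.abs_le hy)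
    (hg.abs_le_add_of_abs_le huv hR hδ hlen hE hvol hgA hy)

theorem propagatesSmallness_step (hg : HasCauchyBounds g (Icc a b) M R) (hM : 0 < M) (hR : 0 < R)
    {p h : ℝ} (hh : h ≠ 0) (hhR : |h| ≤ R / 96) (hp : p ∈ Icc a b) (hp' : p + 2 * h ∈ Icc a b) :
    PropagatesSmallness g M 6 (logb 24 2) (uIcc p (p + h)) (uIcc (p + h) (p + 2 * h)) := by
  have hlt : min p (p + 2 * h) < max p (p + 2 * h) := by simpa using hh
  have hlen : max p (p + 2 * h) - min p (p + 2 * h) = 2 * |h| := by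
    rw [max_sub_min_eq_abs, add_sub_cancel_left, abs_mul, abs_two]
  have hmid : p + h ∈ uIcc p (p + 2 * h) := by
    rw [mem_uIcc]
    rcases le_total 0 h with h0 | h0
    · exact Or.inl ⟨by linarith, by linarith⟩
    · exact Or.inr ⟨by linarith, by linarith⟩
  have hsub : uIcc p (p + 2 * h) ⊆ Icc a b := uIcc_subset_Icc hp hp'
  have hg' : HasCauchyBounds g (uIcc p (p + 2 * h)) M R :=
    hg.mono hsub (uniqueDiffOn_Icc hlt)
      (uniqueDiffOn_Icc (hlt.trans_le' (le_min hp.1 hp'.1) |>.trans_le (max_le hp.2 hp'.2)))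
  have hshort := hg'.propagatesSmallness_of_short (δ := 1 / 2) (E := uIcc p (p + h)) hM hR hlt
    (by norm_num) (by linarith) (uIcc_subset_uIcc_left hmid)
    (by rw [hlen, volume_interval, add_sub_cancel_left]; apply le_of_eq; ring_nf)
  rw [show (12 : ℝ) / (1 / 2) = 24 by norm_num] at hshort
  exact hshort.mono subset_rfl (uIcc_subset_uIcc_right hmid)

theorem propagatesSmallness_chain (hg : HasCauchyBounds g (Icc a b) M R) (hM : 0 < M) (hR : 0 < R)
    {p h : ℝ} (hh : h ≠ 0) (hhR : |h| ≤ R / 96) (k : ℕ)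
    (hp : ∀ i : ℕ, i ≤ k + 1 → p + i * h ∈ Icc a b) :
    PropagatesSmallness g M (6 ^ k) (logb 24 2 ^ k) (uIcc p (p + h))
      (uIcc (p + k * h) (p + (k + 1) * h)) := by
  induction k with
  | zero => simpa using PropagatesSmallness.refl g M (uIcc p (p + h))
  | succ k ih =>
    have hstep := hg.propagatesSmallness_step (p := p + k * h) hM hR hh hhR (hp k (by lia))
      (by have := hp (k + 2) le_rfl; push_cast at this; convert this using 1; ring)
    have hmid : p + (k + 1) * h = p + k * h + h := by ring
    have hend : p + (k + 1 + 1) * h = p + k * h + 2 * h := by ring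
    rw [pow_succ, pow_succ, Nat.cast_succ, hend, hmid]
    rw [hmid] at ih
    exact (ih fun i hi ↦ hp i (by lia)).trans hstep hM (one_le_pow₀ (by norm_num)) (by norm_num)
      (Ioo_subset_Icc_self (logb_two_mem_Ioo (by norm_num)))

theorem propagatesSmallness_of_window (hg : HasCauchyBounds g (Icc a b) M R) (hM : 0 < M)
    (hR : 0 < R) {p w : ℝ} (hw : 0 < w) (hwR : w ≤ R / 96) (hsub : Icc p (p + w) ⊆ Icc a b)
    {k : ℕ} (hk : b - a ≤ (k + 1) * w) :
    PropagatesSmallness g M (6 ^ k) (logb 24 2 ^ k) (Icc p (p + w)) (Icc a b) := by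
  intro A hA hgA x hx
  have hk0 : (0 : ℝ) < k + 1 := by positivity
  have hpa := (hsub (left_mem_Icc.2 (by linarith))).1
  have hpb := (hsub (right_mem_Icc.2 (by linarith))).2
  obtain ⟨q, hq, hqx, hstart⟩ := exists_mem_Icc_add_sub_div_mem_Icc hw hk0
    (by linarith [hx.1] : p + w - x ≤ (k + 1) * w) (by linarith [hx.2])
  set h := (x - q) / (k + 1)
  have hh : |h| ≤ w := by
    simpa using abs_sub_le_of_le_of_le hstart.1 hstart.2 hq.1 hq.2
  have hend : q + (k + 1) * h = x := by rw [mul_div_cancel₀ _ hk0.ne']; ring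
  have hpath : ∀ i : ℕ, i ≤ k + 1 → q + i * h ∈ Icc a b := fun i hi ↦ by
    have hi' : (i : ℝ) / (k + 1) ∈ Icc (0 : ℝ) 1 :=
      ⟨by positivity, (div_le_one hk0).2 (mod_cast hi)⟩
    convert (convex_Icc a b).add_smul_sub_mem (hsub hq) hx hi' using 1
    simp only [h, smul_eq_mul]
    ring
  exact hg.propagatesSmallness_chain hM hR (div_ne_zero hqx hk0.ne') (hh.trans hwR) k hpath A hA
    (fun y hy ↦ hgA y (uIcc_subset_Icc hq hstart hy)) x (by rw [hend]; exact right_mem_uIcc)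

end HasCauchyBounds

end PropagatesSmallness

section Selection

variable {α : Type*} [MeasurableSpace α] {μ : Measure α} {E : Set α}

theorem exists_measure_le_card_mul_measure_inter {ι : Type*} {t : Finset ι} (ht : t.Nonempty)
    {W : ι → Set α} (hE : E ⊆ ⋃ i ∈ t, W i) : ∃ i ∈ t, μ E ≤ t.card * μ (E ∩ W i) := by
  obtain ⟨i, hi, hmax⟩ := t.exists_max_image (fun i ↦ μ (E ∩ W i)) ht
  refine ⟨i, hi, ?_⟩
  calc μ E ≤ μ (⋃ j ∈ t, E ∩ W j) := measure_mono fun x hx ↦ by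
        simpa only [← inter_iUnion₂] using mem_inter hx (hE hx)
    _ ≤ ∑ j ∈ t, μ (E ∩ W j) := measure_biUnion_finset_le _ _
    _ ≤ t.card • μ (E ∩ W i) := Finset.sum_le_card_nsmul _ _ _ hmax
    _ = t.card * μ (E ∩ W i) := nsmul_eq_mul _ _

theorem mul_measureReal_setOf_mul_average_lt_le [IsFiniteMeasure μ] {f : α → ℝ} (hf : 0 ≤ f)
    (hfi : Integrable f μ) {t : ℝ} (ht : 0 ≤ t) :
    t * μ.real {x | t * ⨍ y, f y ∂μ < f x} ≤ μ.real univ := by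
  set m := ⨍ y, f y ∂μ
  have hm : 0 ≤ m := integral_nonneg hf
  by_cases h0 : μ {x | t * m < f x} = 0
  · simp [measureReal_def, h0]
  refine (lt_of_mul_lt_mul_right ?_ hm).le
  calc t * μ.real {x | t * m < f x} * m = μ.real {x | t * m < f x} * (t * m) := by ring
    _ < ∫ x in {x | t * m < f x}, f x ∂μ :=
      setIntegral_gt_gt (mul_nonneg ht hm) hfi.integrableOn h0
    _ ≤ ∫ x, f x ∂μ := setIntegral_le_integral hfi (.of_forall hf)
    _ = μ.real univ * m := (measure_smul_average μ f).symm

theorem measure_le_two_mul_measure_setOf_le_two_mul_average (hE : NullMeasurableSet E μ)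
    (hEfin : μ E ≠ ⊤) {f : α → ℝ} (hf : 0 ≤ f) (hfi : IntegrableOn f E μ) :
    μ E ≤ 2 * μ {x ∈ E | f x ≤ 2 * ⨍ y in E, f y ∂μ} := by
  have : IsFiniteMeasure (μ.restrict E) := ⟨by simpa using hEfin.lt_top⟩
  set m := ⨍ y in E, f y ∂μ
  have hsplit : (μ.restrict E).real univ ≤
      (μ.restrict E).real {x | f x ≤ 2 * m} + (μ.restrict E).real {x | 2 * m < f x} :=
    (measureReal_mono fun x _ ↦ le_or_gt (f x) (2 * m)).trans (measureReal_union_le _ _)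
  have hmarkov : 2 * (μ.restrict E).real {x | 2 * m < f x} ≤ (μ.restrict E).real univ :=
    mul_measureReal_setOf_mul_average_lt_le hf hfi zero_le_two
  have hE_eq : (μ.restrict E).real univ = (μ E).toReal := by simp [measureReal_def]
  have hgood_eq : (μ.restrict E).real {x | f x ≤ 2 * m} = (μ {x ∈ E | f x ≤ 2 * m}).toReal := by
    rw [measureReal_def, Measure.restrict_apply₀' hE, inter_comm]
    rfl
  have hfin : μ {x ∈ E | f x ≤ 2 * m} ≠ ⊤ := measure_ne_top_of_subset (sep_subset _ _) hEfin
  rw [← ENNReal.toReal_le_toReal hEfin (ENNReal.mul_ne_top ENNReal.ofNat_ne_top hfin),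
    ENNReal.toReal_mul, ENNReal.toReal_ofNat, ← hE_eq, ← hgood_eq]
  linarith

theorem abs_le_mul_setAverage_rpow_of_propagatesSmallness {g : α → ℝ} {M C θ : ℝ} {F J : Set α}
    (hF : NullMeasurableSet F μ) (hFfin : μ F ≠ ⊤) (hg : IntegrableOn (fun y ↦ |g y|) F μ)
    (hM : 0 ≤ M) (hC : 0 ≤ C) (hθ : θ ≤ 1)
    (h : ∀ E ⊆ F, μ F ≤ 2 * μ E → PropagatesSmallness g M C θ E J) {x : α} (hx : x ∈ J) :
    |g x| ≤ 2 * C * M ^ (1 - θ) * (⨍ y in F, |g y| ∂μ) ^ θ := by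
  have hg0 : 0 ≤ fun y ↦ |g y| := fun y ↦ abs_nonneg (g y)
  set m := ⨍ y in F, |g y| ∂μ
  have hm : 0 ≤ m := integral_nonneg hg0
  have hprop := h {y ∈ F | |g y| ≤ 2 * m} (sep_subset _ _)
    (measure_le_two_mul_measure_setOf_le_two_mul_average hF hFfin hg0 hg)
  calc |g x| ≤ C * M ^ (1 - θ) * (2 * m) ^ θ := hprop _ (by positivity) (fun y hy ↦ hy.2) x hx
    _ = 2 ^ θ * C * M ^ (1 - θ) * m ^ θ := by
        rw [mul_rpow zero_le_two hm]
        ring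
    _ ≤ 2 * C * M ^ (1 - θ) * m ^ θ := by
        gcongr
        exact rpow_le_self_of_one_le one_le_two hθ

end Selection

theorem Icc_subset_biUnion_Icc_add_mul (a h : ℝ) (n : ℕ) :
    Icc a (a + (n + 1) * h) ⊆
      ⋃ i ∈ Finset.range (n + 1), Icc (a + i * h) (a + i * h + h) := by
  induction n with
  | zero => simp
  | succ n ih =>
    rw [Finset.range_add_one, Finset.set_biUnion_insert, union_comm]
    refine (Icc_subset_Icc_union_Icc (b := a + (n + 1) * h)).trans (union_subset_union ih ?_)
    push_cast
    refine Icc_subset_Icc_right (le_of_eq (by ring))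

theorem exists_window_of_le_volume {a w δ : ℝ} {N : ℕ} {E : Set ℝ}
    (hE : E ⊆ Icc a (a + (N + 1) * w)) (hvol : ENNReal.ofReal (δ * ((N + 1) * w)) ≤ volume E) :
    ∃ i ≤ N, ENNReal.ofReal (δ * w) ≤ volume (E ∩ Icc (a + i * w) (a + i * w + w)) := by
  obtain ⟨i, hi, hdense⟩ := exists_measure_le_card_mul_measure_inter (μ := volume)
    Finset.nonempty_range_add_one (hE.trans (Icc_subset_biUnion_Icc_add_mul a w N))
  refine ⟨i, Nat.lt_succ_iff.1 (Finset.mem_range.1 hi), ?_⟩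
  rw [Finset.card_range] at hdense
  rw [← ENNReal.mul_le_mul_iff_right (Nat.cast_ne_zero.2 N.succ_ne_zero) (by simp)]
  refine le_trans (le_of_eq ?_) (hvol.trans hdense)
  rw [← ENNReal.ofReal_natCast, ← ENNReal.ofReal_mul (Nat.cast_nonneg _), Nat.cast_succ,
    mul_left_comm]

namespace HasCauchyBounds

variable {g : ℝ → ℝ} {M R a b : ℝ}

theorem propagatesSmallness_of_volume_le (hg : HasCauchyBounds g (Icc a b) M R) (hM : 0 < M)
    (hR : 0 < R) (hab : a < b) {δ : ℝ} (hδ : δ ∈ Ioc 0 1) {E : Set ℝ} (hE : E ⊆ Icc a b)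
    (hvol : ENNReal.ofReal (δ * (b - a)) ≤ volume E) {N : ℕ}
    (hN : 96 * (b - a) ≤ δ * R * (N + 1)) :
    PropagatesSmallness g M (6 * 6 ^ N) (logb (12 / δ) 2 * logb 24 2 ^ N) E (Icc a b) := by
  obtain ⟨hδ0, hδ1⟩ := hδ
  have hN0 : (0 : ℝ) < N + 1 := by positivity
  set w := (b - a) / (N + 1)
  have hw : 0 < w := div_pos (sub_pos.2 hab) hN0
  have hNw : (N + 1) * w = b - a := mul_div_cancel₀ _ hN0.ne'
  have hwδ : w ≤ δ * R / 96 := (div_le_iff₀ hN0).2 (by linarith)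
  have hwR : w ≤ R / 96 := hwδ.trans (by gcongr; exact mul_le_of_le_one_left hR.le hδ1)
  obtain ⟨i, hi, hdense⟩ := exists_window_of_le_volume (a := a) (w := w) (E := E) (N := N)
    (by rwa [hNw, add_sub_cancel]) (by rwa [hNw])
  set p := a + i * w
  have hsub : Icc p (p + w) ⊆ Icc a b := by
    have hiN : (i + 1 : ℝ) ≤ N + 1 := mod_cast Nat.succ_le_succ hi
    refine Icc_subset_Icc (le_add_of_nonneg_right (by positivity)) ?_
    linarith [mul_le_mul_of_nonneg_right hiN hw.le]
  have hpw : p < p + w := lt_add_of_pos_right p hw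
  have hgw := hg.mono hsub (uniqueDiffOn_Icc hpw) (uniqueDiffOn_Icc hab)
  have hwindow := hgw.propagatesSmallness_of_short hM hR hpw ⟨hδ0, hδ1⟩
    (by linarith [mul_pos hδ0 hR]) inter_subset_right (by rwa [add_sub_cancel_left])
  have hθ : logb 24 2 ∈ Ioo (0 : ℝ) 1 := logb_two_mem_Ioo (by norm_num)
  exact (hwindow.mono inter_subset_left subset_rfl).trans
    (hg.propagatesSmallness_of_window hM hR hw hwR hsub hNw.ge) hM (by norm_num) (by positivity)
    ⟨pow_nonneg hθ.1.le N, pow_le_one₀ hθ.1.le hθ.2.le⟩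

end HasCauchyBounds

theorem propagation_smallness_1d_general {ρ κ : ℝ} (hρ : 0 < ρ) (hκ : κ ∈ Ioc 0 1) :
    ∃ C : ℝ, 1 ≤ C ∧ ∃ θ ∈ Ioo (0 : ℝ) 1, ∀ (a s M : ℝ) (g : ℝ → ℝ) (F : Set ℝ),
      0 < s → 0 < M → HasCauchyBounds g (Icc a (a + s)) M (s * ρ) →
      NullMeasurableSet F volume → F ⊆ Icc a (a + s) → ENNReal.ofReal (κ * s) ≤ volume F →
      ∀ x ∈ Icc a (a + s),
        |g x| ≤ C * M ^ (1 - θ) * ((volume F).toReal⁻¹ * ∫ y in F, |g y|) ^ θ := by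
  obtain ⟨N, hN⟩ := exists_nat_ge (192 / (ρ * κ))
  set θ := logb (24 / κ) 2 * logb 24 2 ^ N
  have hκ_exp : logb (24 / κ) 2 ∈ Ioo 0 1 :=
    logb_two_mem_Ioo ((lt_div_iff₀ hκ.1).2 (by linarith [hκ.2]))
  have hstep_exp : logb 24 2 ∈ Ioo (0 : ℝ) 1 := logb_two_mem_Ioo (by norm_num)
  have hθ : θ ∈ Ioo 0 1 := ⟨mul_pos hκ_exp.1 (pow_pos hstep_exp.1 N),
    mul_lt_one_of_nonneg_of_lt_one_left hκ_exp.1.le hκ_exp.2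
      (pow_le_one₀ hstep_exp.1.le hstep_exp.2.le)⟩
  refine ⟨2 * (6 * 6 ^ N), by linarith [one_le_pow₀ (n := N) (by norm_num : (1 : ℝ) ≤ 6)], θ, hθ,
    fun a s M g F hs hM hg hF hFs hvol x hx ↦ ?_⟩
  rw [div_le_iff₀ (mul_pos hρ hκ.1)] at hN
  have hprop : ∀ E ⊆ F, volume F ≤ 2 * volume E →
      PropagatesSmallness g M (6 * 6 ^ N) θ E (Icc a (a + s)) := fun E hEF hFE ↦ by
    have hE : ENNReal.ofReal (κ / 2 * (a + s - a)) ≤ volume E := by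
      rw [← ENNReal.mul_le_mul_iff_right two_ne_zero ENNReal.ofNat_ne_top]
      refine le_trans (le_of_eq ?_) (hvol.trans hFE)
      rw [← ENNReal.ofReal_ofNat 2, ← ENNReal.ofReal_mul zero_le_two]
      ring_nf
    have hwindow := hg.propagatesSmallness_of_volume_le (N := N) hM (mul_pos hs hρ) (by linarith)
      ⟨half_pos hκ.1, by linarith [hκ.2]⟩ (hEF.trans hFs) hE (by nlinarith [mul_pos hρ hκ.1])
    rwa [show 12 / (κ / 2) = 24 / κ by field_simp; norm_num] at hwindow
  have hFfin : volume F ≠ ⊤ := measure_ne_top_of_subset hFs measure_Icc_lt_top.ne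
  have hint : IntegrableOn (fun y ↦ |g y|) F :=
    hg.contDiffOn.continuousOn.abs.integrableOn_Icc.mono_set hFs
  simpa [setAverage_eq, measureReal_def] using
    abs_le_mul_setAverage_rpow_of_propagatesSmallness hF hFfin hint hM.le (by positivity) hθ.2.le
      hprop hx

/-- Propagation of smallness from measurable sets for real analytic functions,
one-dimensional case. -/
theorem propagation_smallness_1d (ρ κ : ℝ) (hρ : ρ ∈ Set.Ioc (0:ℝ) 1)
    (hκ : κ ∈ Set.Ioc (0:ℝ) 1) :
    ∃ C : ℝ, 1 ≤ C ∧ ∃ θ : ℝ, θ ∈ Set.Ioo (0:ℝ) 1 ∧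
      ∀ (a s M : ℝ) (g : ℝ → ℝ) (F : Set ℝ),
        0 < s → 0 < M →
        ContDiffOn ℝ (⊤ : ℕ∞) g (Set.Icc a (a + s)) →
        (∀ k : ℕ, ∀ x ∈ Set.Icc a (a + s),
          |iteratedDerivWithin k g (Set.Icc a (a + s)) x| ≤
            M * (Nat.factorial k) * ((s * ρ) ^ k)⁻¹) →
        MeasurableSet F → F ⊆ Set.Icc a (a + s) →
        ENNReal.ofReal (κ * s) ≤ volume F →
        ∀ x ∈ Set.Icc a (a + s),
          |g x| ≤ C * M ^ (1 - θ) *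
            (((volume F).toReal)⁻¹ * ∫ y in F, |g y|) ^ θ := by
  obtain ⟨C, hC, θ, hθ, h⟩ := propagation_smallness_1d_general hρ.1 hκ
  exact ⟨C, hC, θ, hθ, fun a s M g F hs hM hg hbound hF ↦
    h a s M g F hs hM ⟨hg, hbound⟩ hF.nullMeasurableSet⟩
end

section
/- Let T > 0 and let E ⊆ (0,T) be a Lebesgue measurable set of positive measure. Let l ∈ (0,T) be a right Lebesgue density point of E, i.e. lim_{λ → 0⁺} |E ∩ (l, l+λ)| / λ = 1. Then for each q ∈ (0,1) there exists a monotonically decreasing sequence {ℓ_n}_{n ≥ 1} ⊆ (l, T] converging to l such that for every n ≥ 1: (i) ℓ_{n+1} − ℓ_{n+2} = q (ℓ_n − ℓ_{n+1}), and (ii) |E ∩ (ℓ_{n+1}, ℓ_n)| ≥ (ℓ_n − ℓ_{n+1}) / 3. -/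
open MeasureTheory Set Filter

/-!
The points `l + c * q ^ n` have consecutive gaps in ratio `q`, so it only remains to choose the
scale `c`. If `μ (E ∩ (l, l + x)) / x → d` as `x → 0⁺`, then subtracting the contribution of
`(l, l + q * x)` shows that `E` has asymptotic density `(d - q * d) / (1 - q) = d` in the annulus
`(l + q * x, l + x)` as well. Hence for every small `x` this density exceeds any given `κ < d`,
and a single small `c` serves all scales `x = c * q ^ n` at once.
-/

open scoped Topology

/-- The points `l + c * q ^ n`, approaching `l` geometrically with ratio `q` from the initial
offset `c`. -/
def geometricApproach {R : Type*} [Semiring R] (l c q : R) (n : ℕ) : R :=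
  l + c * q ^ n

namespace geometricApproach

theorem succ_eq {R : Type*} [CommSemiring R] (l c q : R) (n : ℕ) :
    geometricApproach l c q (n + 1) = l + q * (c * q ^ n) := by
  rw [geometricApproach]
  ring

theorem sub_succ {R : Type*} [CommRing R] (l c q : R) (n : ℕ) :
    geometricApproach l c q n - geometricApproach l c q (n + 1) = (1 - q) * (c * q ^ n) := by
  rw [succ_eq, geometricApproach]
  ring

theorem succ_sub_succ_succ {R : Type*} [CommRing R] (l c q : R) (n : ℕ) :
    geometricApproach l c q (n + 1) - geometricApproach l c q (n + 2) =
      q * (geometricApproach l c q n - geometricApproach l c q (n + 1)) := by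
  rw [sub_succ, sub_succ]
  ring

theorem strictAnti {R : Type*} [Semiring R] [PartialOrder R] [IsStrictOrderedRing R] {l c q : R}
    (hc : 0 < c) (hq₀ : 0 < q) (hq₁ : q < 1) : StrictAnti (geometricApproach l c q) :=
  ((pow_right_strictAnti₀ hq₀ hq₁).const_mul hc).const_add l

theorem mem_Ioc {R : Type*} [Semiring R] [PartialOrder R] [IsStrictOrderedRing R] {l c q : R}
    (hc : 0 < c) (hq₀ : 0 < q) (hq₁ : q ≤ 1) (n : ℕ) :
    geometricApproach l c q n ∈ Ioc l (l + c) :=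
  ⟨lt_add_of_pos_right l (mul_pos hc (pow_pos hq₀ n)),
    add_le_add_right (mul_le_of_le_one_right hc.le (pow_le_one₀ hq₀.le hq₁)) l⟩

theorem tendsto {K : Type*} [Field K] [LinearOrder K] [IsStrictOrderedRing K] [Archimedean K]
    [TopologicalSpace K] [OrderTopology K] (l c : K) {q : K} (hq₀ : 0 ≤ q) (hq₁ : q < 1) :
    Tendsto (geometricApproach l c q) atTop (𝓝 l) := by
  have hlim := ((tendsto_pow_atTop_nhds_zero_of_lt_one hq₀ hq₁).const_mul c).const_add l
  rwa [mul_zero, add_zero] at hlim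

end geometricApproach

theorem eventually_nhdsGT_zero_forall_mul_pow {K : Type*} [Field K] [LinearOrder K]
    [IsStrictOrderedRing K] [TopologicalSpace K] [OrderTopology K] {p : K → Prop} {q : K}
    (hq₀ : 0 < q) (hq₁ : q ≤ 1) (hp : ∀ᶠ x in 𝓝[>] 0, p x) :
    ∀ᶠ c in 𝓝[>] 0, ∀ n : ℕ, p (c * q ^ n) := by
  obtain ⟨δ, hδ, hp⟩ := mem_nhdsGT_iff_exists_Ioc_subset.1 hp
  filter_upwards [Ioc_mem_nhdsGT hδ] with c ⟨hc, hcδ⟩ n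
  exact hp ⟨mul_pos hc (pow_pos hq₀ n),
    (mul_le_of_le_one_right hc.le (pow_le_one₀ hq₀.le hq₁)).trans hcδ⟩

theorem measureReal_inter_Ioo_add_inter_Ioo {α : Type*} [TopologicalSpace α] [LinearOrder α]
    [OrderClosedTopology α] [CompactIccSpace α] [MeasurableSpace α] [OpensMeasurableSpace α]
    (μ : Measure α) [IsLocallyFiniteMeasure μ] [NullSingletonClass μ] (E : Set α) {a b c : α}
    (hab : a ≤ b) (hbc : b < c) :
    μ.real (E ∩ Ioo a b) + μ.real (E ∩ Ioo b c) = μ.real (E ∩ Ioo a c) := by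
  have hdisj : Disjoint (Ioc a b) (Ioo b c) :=
    disjoint_left.2 fun _ hx hx' ↦ hx.2.not_gt hx'.1
  simp only [inter_comm E, ← measureReal_restrict_apply measurableSet_Ioo]
  rw [measureReal_congr Ioo_ae_eq_Ioc, ← Ioc_union_Ioo_eq_Ioo hab hbc,
    measureReal_union hdisj measurableSet_Ioo measure_Ioc_lt_top.ne measure_Ioo_lt_top.ne]

/-- The set `E` has `μ`-density `d` immediately to the right of `l`, measured against the length
of the interval. For `μ = volume` and `d = 1`, `l` is a right Lebesgue density point of `E`. -/
def HasRightDensity (μ : Measure ℝ) (E : Set ℝ) (l d : ℝ) : Prop :=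
  Tendsto (fun x : ℝ ↦ μ.real (E ∩ Ioo l (l + x)) / x) (𝓝[>] 0) (𝓝 d)

namespace HasRightDensity

variable {μ : Measure ℝ} [IsLocallyFiniteMeasure μ] [NullSingletonClass μ] {E : Set ℝ} {l d q : ℝ}

theorem tendsto_annulus (h : HasRightDensity μ E l d) (hq₀ : 0 < q) (hq₁ : q < 1) :
    Tendsto (fun x : ℝ ↦ μ.real (E ∩ Ioo (l + q * x) (l + x)) / ((1 - q) * x)) (𝓝[>] 0) (𝓝 d) := by
  have hq : 1 - q ≠ 0 := (sub_pos.2 hq₁).ne'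
  have hscale : Tendsto (fun x : ℝ ↦ q * x) (𝓝[>] 0) (𝓝[>] 0) :=
    tendsto_nhdsWithin_of_tendsto_nhds_of_eventually_within _
      ((continuous_const_mul q).tendsto' 0 0 (mul_zero q) |>.mono_left nhdsWithin_le_nhds)
      (eventually_mem_nhdsWithin.mono fun x hx ↦ mul_pos hq₀ hx)
  have hlim := (h.sub ((h.comp hscale).const_mul q)).div_const (1 - q)
  rw [show (d - q * d) / (1 - q) = d by field_simp] at hlim
  refine hlim.congr' ?_
  filter_upwards [self_mem_nhdsWithin] with x (hx : 0 < x)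
  have hadd := measureReal_inter_Ioo_add_inter_Ioo μ E
    (le_add_of_nonneg_right (mul_pos hq₀ hx).le)
    (add_lt_add_right (mul_lt_of_lt_one_left hx hq₁) l)
  rw [← hadd, Function.comp_apply]
  field_simp
  ring

theorem eventually_le_annulus {κ : ℝ} (h : HasRightDensity μ E l d) (hκ : κ < d) (hq₀ : 0 < q)
    (hq₁ : q < 1) :
    ∀ᶠ x in 𝓝[>] 0, κ * ((1 - q) * x) ≤ μ.real (E ∩ Ioo (l + q * x) (l + x)) := by
  filter_upwards [(h.tendsto_annulus hq₀ hq₁).eventually_const_lt hκ, self_mem_nhdsWithin]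
    with x hx (hx₀ : 0 < x)
  exact ((lt_div_iff₀ (mul_pos (sub_pos.2 hq₁) hx₀)).1 hx).le

theorem eventually_le_geometricApproach {κ : ℝ} (h : HasRightDensity μ E l d) (hκ : κ < d)
    (hq₀ : 0 < q) (hq₁ : q < 1) :
    ∀ᶠ c in 𝓝[>] 0, ∀ n,
      κ * (geometricApproach l c q n - geometricApproach l c q (n + 1)) ≤
        μ.real (E ∩ Ioo (geometricApproach l c q (n + 1)) (geometricApproach l c q n)) := by
  filter_upwards [eventually_nhdsGT_zero_forall_mul_pow hq₀ hq₁.le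
    (h.eventually_le_annulus hκ hq₀ hq₁)] with c hc n
  rw [geometricApproach.sub_succ, geometricApproach.succ_eq]
  exact hc n

end HasRightDensity

theorem density_point_sequence_general {μ : Measure ℝ} [IsLocallyFiniteMeasure μ]
    [NullSingletonClass μ] {E : Set ℝ} {l d κ T q : ℝ} (h : HasRightDensity μ E l d) (hκ : κ < d)
    (hlT : l < T) (hq : q ∈ Ioo 0 1) :
    ∃ ℓ : ℕ → ℝ, StrictAnti ℓ ∧ (∀ n, ℓ n ∈ Ioc l T) ∧ Tendsto ℓ atTop (𝓝 l) ∧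
      (∀ n, ℓ (n + 1) - ℓ (n + 2) = q * (ℓ n - ℓ (n + 1))) ∧
      ∀ n, κ * (ℓ n - ℓ (n + 1)) ≤ μ.real (E ∩ Ioo (ℓ (n + 1)) (ℓ n)) := by
  obtain ⟨hq₀, hq₁⟩ := hq
  obtain ⟨c, hdens, hc, hcT⟩ :=
    ((h.eventually_le_geometricApproach hκ hq₀ hq₁).and
      (Ioc_mem_nhdsGT (sub_pos.2 hlT))).exists
  have hsub : Ioc l (l + c) ⊆ Ioc l T := Ioc_subset_Ioc_right (le_sub_iff_add_le'.1 hcT)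
  exact ⟨geometricApproach l c q, geometricApproach.strictAnti hc hq₀ hq₁,
    fun n ↦ hsub (geometricApproach.mem_Ioc hc hq₀ hq₁.le n),
    geometricApproach.tendsto l c hq₀.le hq₁, geometricApproach.succ_sub_succ_succ l c q, hdens⟩

/-- Selection of a geometric-like sequence of times around a right Lebesgue density
point of a measurable set `E ⊆ (0,T)`. -/
theorem density_point_sequence (T : ℝ) (hT : 0 < T) (E : Set ℝ)
    (hE_meas : MeasurableSet E) (hE_sub : E ⊆ Set.Ioo 0 T)
    (hE_pos : 0 < volume E)
    (l : ℝ) (hl : l ∈ Set.Ioo 0 T)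
    (hdensity : Tendsto (fun lam : ℝ => (volume (E ∩ Set.Ioo l (l + lam))).toReal / lam)
      (nhdsWithin 0 (Set.Ioi 0)) (nhds 1)) :
    ∀ q ∈ Set.Ioo (0:ℝ) 1, ∃ ℓ : ℕ → ℝ,
      (∀ n, 1 ≤ n → ℓ (n + 1) < ℓ n) ∧
      (∀ n, 1 ≤ n → ℓ n ∈ Set.Ioc l T) ∧
      Tendsto ℓ atTop (nhds l) ∧
      (∀ n, 1 ≤ n → ℓ (n + 1) - ℓ (n + 2) = q * (ℓ n - ℓ (n + 1))) ∧
      (∀ n, 1 ≤ n →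
        (ℓ n - ℓ (n + 1)) / 3 ≤ (volume (E ∩ Set.Ioo (ℓ (n + 1)) (ℓ n))).toReal) := by
  intro q hq
  have hE : HasRightDensity volume E l 1 := hdensity
  obtain ⟨ℓ, hanti, hmem, hlim, hgap, hdens⟩ :=
    density_point_sequence_general (κ := 1 / 3) hE (by norm_num) hl.2 hq
  exact ⟨ℓ, fun n _ ↦ hanti n.lt_succ_self, fun n _ ↦ hmem n, hlim, fun n _ ↦ hgap n,
    fun n _ ↦ (one_div_mul_eq_div 3 _).symm.trans_le (hdens n)⟩
end

section
/- Let (a_k)_{k ≥ 1} be a square-summable sequence of real numbers, let (w_k)_{k ≥ 1} be a sequence of nonnegative reals, let R > 0, t > 0, γ ∈ ℕ, and let τ ∈ ℝ with |τ| ≤ 2R. Then Σ_{k ≥ 1} a_k² · w_k^{4γ} · e^{−2 w_k² t + 2 w_k τ} ≤ (2/t)^{2γ} · (γ!)² · e^{4R²/t} · Σ_{k ≥ 1} a_k². -/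
/-!
Half of the Gaussian factor `exp (-2 * w ^ 2 * t)` absorbs the power `w ^ (4 * γ)`, through one term
of the exponential series of `exp (w ^ 2 * t / 2)`, squared. The other half absorbs the linear
exponent `2 * w * τ`, by completing the square. The resulting bound is uniform in `w`.
-/

open scoped Nat

lemma pow_le_inv_pow_mul_factorial_mul_exp {c x : ℝ} (hc : 0 < c) (hx : 0 ≤ x) (n : ℕ) :
    x ^ n ≤ c⁻¹ ^ n * n ! * Real.exp (c * x) := by
  have hterm : (c * x) ^ n ≤ n ! * Real.exp (c * x) :=
    (div_le_iff₀' (by positivity)).mp (Real.pow_div_factorial_le_exp (c * x) (by positivity) n)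
  calc x ^ n = c⁻¹ ^ n * (c * x) ^ n := by rw [← mul_pow, inv_mul_cancel_left₀ hc.ne']
    _ ≤ c⁻¹ ^ n * (n ! * Real.exp (c * x)) := by gcongr
    _ = c⁻¹ ^ n * n ! * Real.exp (c * x) := (mul_assoc ..).symm

lemma pow_four_mul_le_mul_exp_sq_mul {t : ℝ} (ht : 0 < t) (x : ℝ) (n : ℕ) :
    x ^ (4 * n) ≤ (2 / t) ^ (2 * n) * (n ! : ℝ) ^ 2 * Real.exp (x ^ 2 * t) := by
  have hroot : (x ^ 2) ^ n ≤ (2 / t) ^ n * n ! * Real.exp (t / 2 * x ^ 2) := by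
    simpa only [inv_div] using
      pow_le_inv_pow_mul_factorial_mul_exp (half_pos ht) (sq_nonneg x) n
  calc x ^ (4 * n) = ((x ^ 2) ^ n) ^ 2 := by ring
    _ ≤ ((2 / t) ^ n * n ! * Real.exp (t / 2 * x ^ 2)) ^ 2 := by gcongr
    _ = (2 / t) ^ (2 * n) * (n ! : ℝ) ^ 2 * Real.exp (t / 2 * x ^ 2) ^ 2 := by ring
    _ = (2 / t) ^ (2 * n) * (n ! : ℝ) ^ 2 * Real.exp (x ^ 2 * t) := by
      rw [← Real.exp_nat_mul]
      ring_nf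

lemma neg_sq_mul_add_two_mul_le_sq_div {K : Type*} [Field K] [LinearOrder K]
    [IsStrictOrderedRing K] {t : K} (ht : 0 < t) (x τ : K) :
    -x ^ 2 * t + 2 * x * τ ≤ τ ^ 2 / t := by
  rw [le_div_iff₀ ht]
  linarith [sq_nonneg (x * t - τ)]

lemma pow_four_mul_mul_exp_le {t : ℝ} (ht : 0 < t) (x τ : ℝ) (n : ℕ) :
    x ^ (4 * n) * Real.exp (-2 * x ^ 2 * t + 2 * x * τ) ≤
      (2 / t) ^ (2 * n) * (n ! : ℝ) ^ 2 * Real.exp (τ ^ 2 / t) :=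
  calc x ^ (4 * n) * Real.exp (-2 * x ^ 2 * t + 2 * x * τ)
    _ ≤ (2 / t) ^ (2 * n) * (n ! : ℝ) ^ 2 * Real.exp (x ^ 2 * t) *
          Real.exp (-2 * x ^ 2 * t + 2 * x * τ) := by
      gcongr
      exact pow_four_mul_le_mul_exp_sq_mul ht x n
    _ = (2 / t) ^ (2 * n) * (n ! : ℝ) ^ 2 * Real.exp (-x ^ 2 * t + 2 * x * τ) := by
      rw [mul_assoc, ← Real.exp_add]
      ring_nf
    _ ≤ (2 / t) ^ (2 * n) * (n ! : ℝ) ^ 2 * Real.exp (τ ^ 2 / t) := by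
      gcongr
      exact neg_sq_mul_add_two_mul_le_sq_div ht x τ

theorem weighted_sum_sq_estimate_general {ι : Type*} {a : ι → ℝ} (w : ι → ℝ)
    (ha : Summable fun k => a k ^ 2) {R t τ : ℝ} (ht : 0 < t) (hτ : |τ| ≤ 2 * R) (γ : ℕ) :
    Summable (fun k => a k ^ 2 * w k ^ (4 * γ) * Real.exp (-2 * w k ^ 2 * t + 2 * w k * τ)) ∧
      ∑' k, a k ^ 2 * w k ^ (4 * γ) * Real.exp (-2 * w k ^ 2 * t + 2 * w k * τ) ≤
        (2 / t) ^ (2 * γ) * (γ ! : ℝ) ^ 2 * Real.exp (4 * R ^ 2 / t) * ∑' k, a k ^ 2 := by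
  set C : ℝ := (2 / t) ^ (2 * γ) * (γ ! : ℝ) ^ 2 * Real.exp (4 * R ^ 2 / t)
  have hτ_sq : τ ^ 2 ≤ 4 * R ^ 2 := by
    linarith [sq_le_sq.mpr (hτ.trans (le_abs_self (2 * R)))]
  have weight_le (x : ℝ) : x ^ (4 * γ) * Real.exp (-2 * x ^ 2 * t + 2 * x * τ) ≤ C :=
    (pow_four_mul_mul_exp_le ht x τ γ).trans (by unfold C; gcongr)
  have term_le (k : ι) :
      a k ^ 2 * w k ^ (4 * γ) * Real.exp (-2 * w k ^ 2 * t + 2 * w k * τ) ≤ C * a k ^ 2 := by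
    rw [mul_assoc, mul_comm C]
    exact mul_le_mul_of_nonneg_left (weight_le (w k)) (sq_nonneg (a k))
  have term_nonneg (k : ι) :
      0 ≤ a k ^ 2 * w k ^ (4 * γ) * Real.exp (-2 * w k ^ 2 * t + 2 * w k * τ) := by
    have hpow : 0 ≤ w k ^ (4 * γ) := Even.pow_nonneg ((by decide : Even 4).mul_right γ) (w k)
    positivity
  have hsum := (ha.mul_left C).of_nonneg_of_le term_nonneg term_le
  rw [← tsum_mul_left]
  exact ⟨hsum, hsum.tsum_le_tsum term_le (ha.mul_left C)⟩

/-- Key quantitative estimate for eigenfunction expansions: a weighted sum of squares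
is controlled by the plain sum of squares. -/
theorem weighted_sum_sq_estimate (a w : ℕ → ℝ) (ha : Summable (fun k => (a k) ^ 2))
    (hw : ∀ k, 0 ≤ w k) (R t : ℝ) (hR : 0 < R) (ht : 0 < t)
    (γ : ℕ) (τ : ℝ) (hτ : |τ| ≤ 2 * R) :
    (∑' k : ℕ, (a k) ^ 2 * (w k) ^ (4 * γ) *
        Real.exp (-2 * (w k) ^ 2 * t + 2 * (w k) * τ)) ≤
      (2 / t) ^ (2 * γ) * ((Nat.factorial γ : ℝ)) ^ 2 * Real.exp (4 * R ^ 2 / t) *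
        ∑' k : ℕ, (a k) ^ 2 :=
  (weighted_sum_sq_estimate_general w ha ht hτ γ).2
end

section
/- Let H be a real Hilbert space, T > 0 and M > 0. Let z : (0,T) → H be Bochner integrable with z(t) ≠ 0 for almost every t ∈ (0,T). Let u* : (0,T) → H be strongly measurable with ‖u*(t)‖ ≤ M for almost every t ∈ (0,T), and suppose that for every strongly measurable u : (0,T) → H with ‖u(t)‖ ≤ M for almost every t, one has ∫₀ᵀ ⟨z(t), u(t)⟩ dt ≤ ∫₀ᵀ ⟨z(t), u*(t)⟩ dt. Then u*(t) = M · z(t) / ‖z(t)‖ for almost every t ∈ (0,T). -/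
open MeasureTheory Set
open scoped RealInnerProductSpace

/-!
Cauchy–Schwarz gives `⟪z t, u t⟫ ≤ M * ‖z t‖` for every admissible `u`, and the admissible
`t ↦ (M / ‖z t‖) • z t` attains this bound at every `t`. A maximizer must therefore have the same
integral as the bound, hence attain it almost everywhere, and the equality case of Cauchy–Schwarz
determines its value wherever `z t ≠ 0`.
-/

section NormedSpace

variable {E : Type*} [SeminormedAddCommGroup E] [NormedSpace ℝ E]

lemma norm_div_norm_smul_le {M : ℝ} (hM : 0 ≤ M) (z : E) : ‖(M / ‖z‖) • z‖ ≤ M := by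
  rw [norm_smul, norm_div, norm_norm, Real.norm_of_nonneg hM, div_mul_comm]
  exact mul_le_of_le_one_left hM (div_self_le_one _)

lemma aestronglyMeasurable_div_norm_smul {α : Type*} [MeasurableSpace α] {μ : Measure α}
    {z : α → E} (M : ℝ) (hz : AEStronglyMeasurable z μ) :
    AEStronglyMeasurable (fun t ↦ (M / ‖z t‖) • z t) μ :=
  (hz.norm.aemeasurable.const_div M).aestronglyMeasurable.smul hz

end NormedSpace

section InnerProductSpace

variable {H : Type*} [SeminormedAddCommGroup H] [InnerProductSpace ℝ H]

lemma real_inner_div_norm_smul_self (M : ℝ) (z : H) : ⟪z, (M / ‖z‖) • z⟫ = M * ‖z‖ := by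
  rw [real_inner_smul_right, real_inner_self_eq_norm_mul_norm, div_mul_eq_mul_div,
    mul_div_assoc, mul_self_div_self]

lemma real_inner_le_mul_norm_of_norm_le {M : ℝ} {z u : H} (hu : ‖u‖ ≤ M) :
    ⟪z, u⟫ ≤ M * ‖z‖ :=
  calc
    ⟪z, u⟫ ≤ ‖u‖ * ‖z‖ := (real_inner_le_norm z u).trans_eq (mul_comm _ _)
    _ ≤ M * ‖z‖ := by gcongr

end InnerProductSpace

lemma eq_div_norm_smul_of_real_inner_eq {H : Type*} [NormedAddCommGroup H]
    [InnerProductSpace ℝ H] {M : ℝ} {z u : H} (hz : z ≠ 0) (hu : ‖u‖ ≤ M)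
    (h : ⟪z, u⟫ = M * ‖z‖) : u = (M / ‖z‖) • z := by
  have norm_u : ‖u‖ = M := by
    refine hu.antisymm (le_of_mul_le_mul_right ?_ (norm_pos_iff.2 hz))
    exact h.symm.trans_le (real_inner_le_mul_norm_of_norm_le le_rfl)
  have cauchy_schwarz_eq : ⟪z, u⟫ = ‖z‖ * ‖u‖ := by rw [h, norm_u, mul_comm]
  simpa only [norm_u, RCLike.ofReal_real_eq_id, id] using
    ((inner_eq_norm_mul_iff_div (𝕜 := ℝ) hz).1 cauchy_schwarz_eq).symm

section Integral

variable {α H : Type*} [MeasurableSpace α] {μ : Measure α}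
  [NormedAddCommGroup H] [InnerProductSpace ℝ H] {M : ℝ} {z u : α → H}

lemma integrable_real_inner_of_norm_le (hz : Integrable z μ) (hu : AEStronglyMeasurable u μ)
    (hu_le : ∀ᵐ t ∂μ, ‖u t‖ ≤ M) : Integrable (fun t ↦ ⟪z t, u t⟫) μ :=
  (innerSL ℝ).integrable_of_bilin_of_bdd_right M hz hu hu_le

lemma ae_eq_of_ae_le_of_integral_le {f g : α → ℝ} (hf : Integrable f μ) (hg : Integrable g μ)
    (hfg : f ≤ᵐ[μ] g) (hgf : ∫ t, g t ∂μ ≤ ∫ t, f t ∂μ) : f =ᵐ[μ] g :=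
  (integral_eq_iff_of_ae_le hf hg hfg).1 ((integral_mono_ae hf hg hfg).antisymm hgf)

theorem bang_bang_maximizer_general (hz : Integrable z μ) (hu : AEStronglyMeasurable u μ)
    (hu_le : ∀ᵐ t ∂μ, ‖u t‖ ≤ M)
    (hmax : ∀ v : α → H, AEStronglyMeasurable v μ → (∀ᵐ t ∂μ, ‖v t‖ ≤ M) →
      ∫ t, ⟪z t, v t⟫ ∂μ ≤ ∫ t, ⟪z t, u t⟫ ∂μ) :
    ∀ᵐ t ∂μ, z t ≠ 0 → u t = (M / ‖z t‖) • z t := by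
  have competitor_le : ∀ᵐ t ∂μ, ‖(M / ‖z t‖) • z t‖ ≤ M := by
    filter_upwards [hu_le] with t ht
    exact norm_div_norm_smul_le ((norm_nonneg _).trans ht) (z t)
  have integral_le : ∫ t, M * ‖z t‖ ∂μ ≤ ∫ t, ⟪z t, u t⟫ ∂μ := by
    simpa only [real_inner_div_norm_smul_self] using
      hmax _ (aestronglyMeasurable_div_norm_smul M hz.aestronglyMeasurable) competitor_le
  have inner_le : ∀ᵐ t ∂μ, ⟪z t, u t⟫ ≤ M * ‖z t‖ :=
    hu_le.mono fun _ ↦ real_inner_le_mul_norm_of_norm_le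
  have inner_eq : ∀ᵐ t ∂μ, ⟪z t, u t⟫ = M * ‖z t‖ :=
    ae_eq_of_ae_le_of_integral_le (integrable_real_inner_of_norm_le hz hu hu_le)
      (hz.norm.const_mul M) inner_le integral_le
  filter_upwards [hu_le, inner_eq] with t hut heq hzt
  exact eq_div_norm_smul_of_real_inner_eq hzt hut heq

end Integral

/-- Bang-bang characterization of maximizers of `u ↦ ∫ ⟨z, u⟩` over the pointwise
ball of radius `M` in a real Hilbert space. -/
theorem bang_bang_maximizer
    (H : Type*) [NormedAddCommGroup H] [InnerProductSpace ℝ H] [CompleteSpace H]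
    (T M : ℝ) (hT : 0 < T) (hM : 0 < M)
    (z : ℝ → H) (hz_int : IntegrableOn z (Set.Ioo 0 T) volume)
    (hz_ne : ∀ᵐ t ∂(volume.restrict (Set.Ioo 0 T)), z t ≠ 0)
    (ustar : ℝ → H)
    (hustar_meas : AEStronglyMeasurable ustar (volume.restrict (Set.Ioo 0 T)))
    (hustar_bdd : ∀ᵐ t ∂(volume.restrict (Set.Ioo 0 T)), ‖ustar t‖ ≤ M)
    (hmax : ∀ u : ℝ → H,
      AEStronglyMeasurable u (volume.restrict (Set.Ioo 0 T)) →
      (∀ᵐ t ∂(volume.restrict (Set.Ioo 0 T)), ‖u t‖ ≤ M) →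
      (∫ t in Set.Ioo 0 T, ⟪z t, u t⟫) ≤ ∫ t in Set.Ioo 0 T, ⟪z t, ustar t⟫) :
    ∀ᵐ t ∂(volume.restrict (Set.Ioo 0 T)), ustar t = (M / ‖z t‖) • z t := by
  filter_upwards [bang_bang_maximizer_general hz_int hustar_meas hustar_bdd hmax, hz_ne]
    with t ht hzt using ht hzt
end

section
/- Let C > 0, θ ∈ (0,1) and p > 0. Then there exist q ∈ (0,1) and K > 0, depending only on C, θ and p, with the following property: for every strictly decreasing sequence (ℓ_n)_{n ≥ 1} of real numbers whose gaps d_n := ℓ_n − ℓ_{n+1} > 0 satisfy d_{n+1} = q · d_n for all n ≥ 1, every bounded sequence (a_n)_{n ≥ 1} of nonnegative reals, and every sequence (B_n)_{n ≥ 1} of nonnegative reals such that a_n ≤ B_n^{θ} · ( e^{C · d_n^{−p}} · a_{n+1} )^{1−θ} for all n ≥ 1, one has a₁ ≤ e^{K · d₁^{−p}} · Σ_{n ≥ 1} B_n. -/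
/-!
With weights `x n = d n ^ (-p)`, multiply the interpolation inequality by `exp (-(K * x n))`.
If `(1 - θ) * (C + K * q ^ (-p)) ≤ K`, the decay of this factor pays both for the cost
`exp (C * x n)` and for the growth of the weights from `x n` to `x (n + 1)`, so the weighted AM-GM
inequality gives `f n ≤ B n + f (n + 1)` for `f n = exp (-(K * x n)) * a n`. This telescopes, and
the remainder `f n` tends to `0`.
-/

open Filter Topology

theorem le_sum_range_add_of_le_add_succ {M : Type*} [AddCommMonoid M] [Preorder M]
    [IsOrderedAddMonoid M] {f b : ℕ → M} (h : ∀ n, f n ≤ b n + f (n + 1)) (n : ℕ) :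
    f 0 ≤ ∑ i ∈ Finset.range n, b i + f n := by
  induction n with
  | zero => simp
  | succ n ih =>
    calc f 0 ≤ ∑ i ∈ Finset.range n, b i + f n := ih
      _ ≤ ∑ i ∈ Finset.range n, b i + (b n + f (n + 1)) := by gcongr; exact h n
      _ = ∑ i ∈ Finset.range (n + 1), b i + f (n + 1) := by
        rw [Finset.sum_range_succ, add_assoc]

theorem le_hasSum_of_le_add_succ {M : Type*} [AddCommMonoid M] [Preorder M]
    [IsOrderedAddMonoid M] [TopologicalSpace M] [ContinuousAdd M] [ClosedIciTopology M]
    {f b : ℕ → M} {s : M} (h : ∀ n, f n ≤ b n + f (n + 1)) (hf : Tendsto f atTop (𝓝 0))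
    (hb : HasSum b s) : f 0 ≤ s := by
  have hlim : Tendsto (fun n ↦ ∑ i ∈ Finset.range n, b i + f n) atTop (𝓝 s) := by
    simpa only [add_zero] using hb.tendsto_sum_nat.add hf
  exact ge_of_tendsto' hlim (le_sum_range_add_of_le_add_succ h)

theorem tendsto_zero_of_succ_eq_mul {R : Type*} [NormedRing R] {q : R} (hq : ‖q‖ < 1)
    {d : ℕ → R} (hd : ∀ n, d (n + 1) = q * d n) : Tendsto d atTop (𝓝 0) := by
  have hpow (n : ℕ) : q ^ n * d 0 = d n := by
    induction n with
    | zero => rw [pow_zero, one_mul]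
    | succ n ih => rw [hd, pow_succ', mul_assoc, ih]
  simpa only [hpow, zero_mul] using (tendsto_pow_atTop_nhds_zero_of_norm_lt_one hq).mul_const (d 0)

theorem rpow_mul_rpow_one_sub_le_add {θ x y : ℝ} (hθ : θ ∈ Set.Icc (0 : ℝ) 1) (hx : 0 ≤ x)
    (hy : 0 ≤ y) : x ^ θ * y ^ (1 - θ) ≤ x + y :=
  calc x ^ θ * y ^ (1 - θ) ≤ θ * x + (1 - θ) * y :=
        Real.geom_mean_le_arith_mean2_weighted hθ.1 (sub_nonneg.2 hθ.2) hx hy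
          (add_sub_cancel θ 1)
    _ ≤ x + y := add_le_add (mul_le_of_le_one_left hx hθ.2)
        (mul_le_of_le_one_left hy (sub_le_self 1 hθ.1))

theorem exp_neg_mul_le_add_of_interpolation {C θ K r x x' a a' b : ℝ}
    (hθ : θ ∈ Set.Icc (0 : ℝ) 1) (hK : 0 ≤ K) (hCK : (1 - θ) * (C + K * r) ≤ K)
    (hx : 0 ≤ x) (hx' : x' ≤ r * x) (ha' : 0 ≤ a') (hb : 0 ≤ b)
    (h : a ≤ b ^ θ * (Real.exp (C * x) * a') ^ (1 - θ)) :
    Real.exp (-(K * x)) * a ≤ b + Real.exp (-(K * x')) * a' := by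
  have hexponent : -(K * x) + C * x * (1 - θ) ≤ -(K * x') * (1 - θ) := by
    have hgrowth : (1 - θ) * (K * x') ≤ (1 - θ) * (K * (r * x)) := by
      have := sub_nonneg.2 hθ.2
      gcongr
    linarith [mul_le_mul_of_nonneg_right hCK hx]
  calc Real.exp (-(K * x)) * a
      ≤ Real.exp (-(K * x)) * (b ^ θ * (Real.exp (C * x) * a') ^ (1 - θ)) := by gcongr
    _ = b ^ θ * (Real.exp (-(K * x) + C * x * (1 - θ)) * a' ^ (1 - θ)) := by
      rw [Real.mul_rpow (Real.exp_pos _).le ha', ← Real.exp_mul, Real.exp_add]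
      ring
    _ ≤ b ^ θ * (Real.exp (-(K * x') * (1 - θ)) * a' ^ (1 - θ)) := by gcongr
    _ = b ^ θ * (Real.exp (-(K * x')) * a') ^ (1 - θ) := by
      rw [Real.mul_rpow (Real.exp_pos _).le ha', ← Real.exp_mul]
    _ ≤ b + Real.exp (-(K * x')) * a' := rpow_mul_rpow_one_sub_le_add hθ hb (by positivity)

theorem ofReal_le_ofReal_exp_mul_tsum_of_interpolation {C θ K r : ℝ} {x a b : ℕ → ℝ}
    (hθ : θ ∈ Set.Icc (0 : ℝ) 1) (hK : 0 ≤ K) (hCK : (1 - θ) * (C + K * r) ≤ K)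
    (hx : ∀ n, 0 ≤ x n) (hxr : ∀ n, x (n + 1) ≤ r * x n) (ha : ∀ n, 0 ≤ a n)
    (hb : ∀ n, 0 ≤ b n) (hlim : Tendsto (fun n ↦ Real.exp (-(K * x n)) * a n) atTop (𝓝 0))
    (h : ∀ n, a n ≤ b n ^ θ * (Real.exp (C * x n) * a (n + 1)) ^ (1 - θ)) :
    ENNReal.ofReal (a 0) ≤
      ENNReal.ofReal (Real.exp (K * x 0)) * ∑' n, ENNReal.ofReal (b n) := by
  set f : ℕ → ℝ := fun n ↦ Real.exp (-(K * x n)) * a n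
  have hf_nonneg (n : ℕ) : 0 ≤ f n := mul_nonneg (Real.exp_pos _).le (ha n)
  have hf_step (n : ℕ) :
      ENNReal.ofReal (f n) ≤ ENNReal.ofReal (b n) + ENNReal.ofReal (f (n + 1)) := by
    rw [← ENNReal.ofReal_add (hb n) (hf_nonneg _)]
    exact ENNReal.ofReal_le_ofReal <| exp_neg_mul_le_add_of_interpolation hθ hK hCK (hx n)
      (hxr n) (ha _) (hb n) (h n)
  have hf_lim : Tendsto (fun n ↦ ENNReal.ofReal (f n)) atTop (𝓝 0) := by
    simpa only [ENNReal.ofReal_zero] using ENNReal.tendsto_ofReal hlim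
  have ha_zero : a 0 = Real.exp (K * x 0) * f 0 := by
    rw [← mul_assoc, ← Real.exp_add, add_neg_cancel, Real.exp_zero, one_mul]
  rw [ha_zero, ENNReal.ofReal_mul (Real.exp_pos _).le]
  gcongr
  exact le_hasSum_of_le_add_succ hf_step hf_lim ENNReal.summable.hasSum

theorem tendsto_exp_neg_mul_rpow_neg_mul_zero {ι : Type*} {l : Filter ι} {K p A : ℝ}
    {d a : ι → ℝ} (hK : 0 < K) (hp : 0 < p) (hd : Tendsto d l (𝓝[>] 0))
    (ha : ∀ i, 0 ≤ a i) (haA : ∀ i, a i ≤ A) :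
    Tendsto (fun i ↦ Real.exp (-(K * d i ^ (-p))) * a i) l (𝓝 0) := by
  have hweight : Tendsto (fun i ↦ K * d i ^ (-p)) l atTop :=
    ((tendsto_rpow_neg_nhdsGT_zero (neg_lt_zero.2 hp)).comp hd).const_mul_atTop hK
  simpa only [mul_comm, Function.comp_apply] using
    bdd_le_mul_tendsto_zero (.of_forall ha) (.of_forall haA)
      (Real.tendsto_exp_neg_atTop_nhds_zero.comp hweight)

theorem telescoping_series_method_general {C θ p q K A : ℝ} {d a B : ℕ → ℝ}
    (hθ : θ ∈ Set.Icc (0 : ℝ) 1) (hp : 0 < p) (hq : 0 < q) (hK : 0 < K)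
    (hCK : (1 - θ) * (C + K * q ^ (-p)) ≤ K)
    (hd : ∀ n, 0 < d n) (hqd : ∀ n, q * d n ≤ d (n + 1)) (hd_lim : Tendsto d atTop (𝓝 0))
    (ha : ∀ n, 0 ≤ a n) (haA : ∀ n, a n ≤ A) (hB : ∀ n, 0 ≤ B n)
    (h : ∀ n, a n ≤ B n ^ θ * (Real.exp (C * d n ^ (-p)) * a (n + 1)) ^ (1 - θ)) :
    ENNReal.ofReal (a 0) ≤
      ENNReal.ofReal (Real.exp (K * d 0 ^ (-p))) * ∑' n, ENNReal.ofReal (B n) := by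
  have hweight (n : ℕ) : d (n + 1) ^ (-p) ≤ q ^ (-p) * d n ^ (-p) := by
    rw [← Real.mul_rpow hq.le (hd n).le]
    exact Real.rpow_le_rpow_of_nonpos (mul_pos hq (hd n)) (hqd n) (neg_nonpos.2 hp.le)
  have hd_lim_pos : Tendsto d atTop (𝓝[>] 0) :=
    tendsto_nhdsWithin_iff.2 ⟨hd_lim, .of_forall hd⟩
  exact ofReal_le_ofReal_exp_mul_tsum_of_interpolation hθ hK.le hCK
    (fun n ↦ Real.rpow_nonneg (hd n).le _) hweight ha hB
    (tendsto_exp_neg_mul_rpow_neg_mul_zero hK hp hd_lim_pos ha haA) h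

theorem exists_ratio_exists_rate {C θ p : ℝ} (hC : 0 < C) (hθ : 0 < θ) (hp : 0 < p) :
    ∃ q ∈ Set.Ioo (0 : ℝ) 1, ∃ K : ℝ, 0 < K ∧ (1 - θ) * (C + K * q ^ (-p)) ≤ K := by
  have hratio : ((1 + θ) ^ (-p)⁻¹) ^ (-p) = 1 + θ :=
    Real.rpow_inv_rpow (by positivity) (neg_ne_zero.2 hp.ne')
  -- The margin `1 - (1 - θ) * q ^ (-p) = θ ^ 2` determines the choice of `K`.
  refine ⟨(1 + θ) ^ (-p)⁻¹, ⟨by positivity, ?_⟩, C / θ ^ 2, by positivity, ?_⟩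
  · exact Real.rpow_lt_one_of_one_lt_of_neg (by linarith) (inv_lt_zero.2 (neg_lt_zero.2 hp))
  · calc (1 - θ) * (C + C / θ ^ 2 * ((1 + θ) ^ (-p)⁻¹) ^ (-p)) = C / θ ^ 2 - C * θ := by
          rw [hratio]
          field_simp
          ring
      _ ≤ C / θ ^ 2 := sub_le_self _ (by positivity)

/-- Abstract telescoping series method: from a two-point interpolation inequality along
a geometrically decreasing sequence of gaps, deduce an observability-type inequality.
The sum on the right is taken in `ℝ≥0∞` so that it is allowed to be infinite. -/
theorem telescoping_series_method (C θ p : ℝ) (hC : 0 < C) (hθ : θ ∈ Set.Ioo (0:ℝ) 1)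
    (hp : 0 < p) :
    ∃ q ∈ Set.Ioo (0:ℝ) 1, ∃ K : ℝ, 0 < K ∧
      ∀ (ℓ a B : ℕ → ℝ),
        (∀ n, 1 ≤ n → 0 < ℓ n - ℓ (n + 1)) →
        (∀ n, 1 ≤ n → ℓ (n + 1) - ℓ (n + 2) = q * (ℓ n - ℓ (n + 1))) →
        (∀ n, 1 ≤ n → 0 ≤ a n) →
        (∃ A : ℝ, ∀ n, 1 ≤ n → a n ≤ A) →
        (∀ n, 1 ≤ n → 0 ≤ B n) →
        (∀ n, 1 ≤ n → a n ≤ (B n) ^ θ *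
          (Real.exp (C * (ℓ n - ℓ (n + 1)) ^ (-p)) * a (n + 1)) ^ (1 - θ)) →
        ENNReal.ofReal (a 1) ≤
          ENNReal.ofReal (Real.exp (K * (ℓ 1 - ℓ 2) ^ (-p))) *
            ∑' n : ℕ, ENNReal.ofReal (B (n + 1)) := by
  obtain ⟨q, hq, K, hK, hCK⟩ := exists_ratio_exists_rate hC hθ.1 hp
  refine ⟨q, hq, K, hK, fun ℓ a B hd hgeo ha ⟨A, hA⟩ hB h ↦ ?_⟩
  have hpos (n : ℕ) : 1 ≤ n + 1 := n.succ_pos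
  have hq_norm : ‖q‖ < 1 := (Real.norm_of_nonneg hq.1.le).trans_lt hq.2
  exact telescoping_series_method_general
    (d := fun n ↦ ℓ (n + 1) - ℓ (n + 2)) (a := fun n ↦ a (n + 1)) (B := fun n ↦ B (n + 1))
    (Set.Ioo_subset_Icc_self hθ) hp hq.1 hK hCK (fun n ↦ hd _ (hpos n))
    (fun n ↦ (hgeo _ (hpos n)).ge)
    (tendsto_zero_of_succ_eq_mul hq_norm fun n ↦ hgeo _ (hpos n))
    (fun n ↦ ha _ (hpos n)) (fun n ↦ hA _ (hpos n)) (fun n ↦ hB _ (hpos n))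
    (fun n ↦ h _ (hpos n))
end

section
/- Let H be a real Hilbert space, T > 0, and let z*, z : (0,T) → H be Bochner integrable with z*(t) ≠ 0 for almost every t ∈ (0,T). Define φ : ℝ → ℝ by φ(h) = (1/2) · ( ∫₀ᵀ ‖z*(t) + h z(t)‖ dt )². Then φ is differentiable at h = 0 and φ'(0) = ( ∫₀ᵀ ⟨z*(t), z(t)⟩ / ‖z*(t)‖ dt ) · ( ∫₀ᵀ ‖z*(t)‖ dt ). -/
open MeasureTheory Set
open scoped RealInnerProductSpace
open scoped NNReal Topology

/-! The norm is `1`-Lipschitz, so the difference quotients of `h ↦ ‖zs t + h • z t‖` are dominated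
by the integrable function `‖z t‖`; off the origin the norm is differentiable with gradient
`x / ‖x‖`. Dominated convergence differentiates the integral, and the chain rule for `r ↦ r² / 2`
does the rest. -/

section LipschitzIntegrand

theorem lipschitzWith_add_smul {𝕜 E : Type*} [NormedField 𝕜] [SeminormedAddCommGroup E]
    [NormedSpace 𝕜 E] (x v : E) :
    LipschitzWith ‖v‖₊ fun c : 𝕜 => x + c • v :=
  LipschitzWith.of_dist_le_mul fun a b => by
    rw [dist_add_left, dist_eq_norm, dist_eq_norm, ← sub_smul, norm_smul, mul_comm, coe_nnnorm]

variable {α F : Type*} [MeasurableSpace α] {μ : Measure α} [NormedAddCommGroup F]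

theorem aestronglyMeasurable_of_hasDerivAt {𝕜 : Type*} [NontriviallyNormedField 𝕜]
    [NormedSpace 𝕜 F] {G : 𝕜 → α → F} {G' : α → F} {c : 𝕜}
    (hG : ∀ x, AEStronglyMeasurable (G x) μ)
    (hderiv : ∀ᵐ a ∂μ, HasDerivAt (fun x => G x a) (G' a) c) :
    AEStronglyMeasurable G' μ :=
  aestronglyMeasurable_of_tendsto_ae (𝓝[≠] c)
    (fun x => ((hG x).sub (hG c)).const_smul (x - c)⁻¹)
    (hderiv.mono fun _ ha => hasDerivAt_iff_tendsto_slope.mp ha)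

theorem hasDerivAt_integral_comp_add_smul {𝕜 E : Type*} [RCLike 𝕜] [NormedAddCommGroup E]
    [NormedSpace 𝕜 E] [NormedSpace 𝕜 F] [NormedSpace ℝ F] {φ : E → F} {C : ℝ≥0}
    (hφ : LipschitzWith C φ) {f g : α → E} {D : α → F} (hf : AEStronglyMeasurable f μ)
    (hφf : Integrable (fun a => φ (f a)) μ) (hg : Integrable g μ)
    (hD : ∀ᵐ a ∂μ, HasLineDerivAt 𝕜 φ (D a) (f a) (g a)) :
    HasDerivAt (fun h : 𝕜 => ∫ a, φ (f a + h • g a) ∂μ) (∫ a, D a ∂μ) 0 := by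
  have hmeas (h : 𝕜) : AEStronglyMeasurable (fun a => φ (f a + h • g a)) μ :=
    hφ.continuous.comp_aestronglyMeasurable (hf.add (hg.aestronglyMeasurable.const_smul h))
  have hlip (a : α) : LipschitzWith (Real.nnabs (C * ‖g a‖)) fun h : 𝕜 => φ (f a + h • g a) := by
    simpa [Function.comp_def] using hφ.comp (lipschitzWith_add_smul (f a) (g a))
  exact (hasDerivAt_integral_of_dominated_loc_of_lip Filter.univ_mem (.of_forall hmeas)
    (by simpa using hφf) (aestronglyMeasurable_of_hasDerivAt hmeas hD)
    (.of_forall fun a => (hlip a).lipschitzOnWith) (hg.norm.const_mul (C : ℝ)) hD).2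

end LipschitzIntegrand

section InnerProductSpace

variable {H : Type*} [NormedAddCommGroup H] [InnerProductSpace ℝ H]

theorem hasStrictFDerivAt_norm {x : H} (hx : x ≠ 0) :
    HasStrictFDerivAt (fun y : H => ‖y‖) (‖x‖⁻¹ • innerSL ℝ x) x := by
  have hsqrt := (hasStrictFDerivAt_norm_sq x).sqrt (by simpa using hx)
  simp only [Real.sqrt_sq (norm_nonneg _)] at hsqrt
  refine hsqrt.congr_fderiv ?_
  ext v
  simp only [one_div, mul_inv_rev, smul_apply, coe_innerSL_apply, nsmul_eq_mul, Nat.cast_ofNat,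
    smul_eq_mul]
  field_simp

theorem hasLineDerivAt_norm {x : H} (hx : x ≠ 0) (v : H) :
    HasLineDerivAt ℝ (fun y : H => ‖y‖) (⟪x, v⟫ / ‖x‖) x v := by
  simpa [div_eq_inv_mul] using (hasStrictFDerivAt_norm hx).hasFDerivAt.hasLineDerivAt v

variable {α : Type*} [MeasurableSpace α] {μ : Measure α} {f g : α → H}

theorem hasDerivAt_integral_norm_add_smul (hf : Integrable f μ) (hg : Integrable g μ)
    (hf_ne : ∀ᵐ a ∂μ, f a ≠ 0) :
    HasDerivAt (fun h : ℝ => ∫ a, ‖f a + h • g a‖ ∂μ) (∫ a, ⟪f a, g a⟫ / ‖f a‖ ∂μ) 0 :=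
  hasDerivAt_integral_comp_add_smul lipschitzWith_one_norm hf.aestronglyMeasurable hf.norm hg
    (hf_ne.mono fun a ha => hasLineDerivAt_norm ha (g a))

theorem hasDerivAt_sq_L1_norm_perturbation_general (hf : Integrable f μ) (hg : Integrable g μ)
    (hf_ne : ∀ᵐ a ∂μ, f a ≠ 0) :
    HasDerivAt (fun h : ℝ => (1 / 2) * (∫ a, ‖f a + h • g a‖ ∂μ) ^ 2)
      ((∫ a, ⟪f a, g a⟫ / ‖f a‖ ∂μ) * ∫ a, ‖f a‖ ∂μ) 0 := by
  have hsq := ((hasDerivAt_integral_norm_add_smul hf hg hf_ne).fun_pow 2).const_mul (1 / 2 : ℝ)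
  refine hsq.congr_deriv ?_
  simp only [zero_smul, add_zero]
  ring

end InnerProductSpace

/-- Differentiability at the origin of the squared `L¹(0,T;H)`-norm of a perturbation,
with the Gâteaux derivative given by
`(∫ ⟨z*, z⟩/‖z*‖) · (∫ ‖z*‖)`. -/
theorem hasDerivAt_sq_L1_norm_perturbation
    (H : Type*) [NormedAddCommGroup H] [InnerProductSpace ℝ H] [CompleteSpace H]
    (T : ℝ) (hT : 0 < T)
    (zs z : ℝ → H)
    (hzs_int : IntegrableOn zs (Set.Ioo 0 T) volume)
    (hz_int : IntegrableOn z (Set.Ioo 0 T) volume)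
    (hzs_ne : ∀ᵐ t ∂(volume.restrict (Set.Ioo 0 T)), zs t ≠ 0) :
    HasDerivAt
      (fun h : ℝ => (1 / 2) * (∫ t in Set.Ioo 0 T, ‖zs t + h • z t‖) ^ 2)
      ((∫ t in Set.Ioo 0 T, ⟪zs t, z t⟫ / ‖zs t‖) * ∫ t in Set.Ioo 0 T, ‖zs t‖)
      0 :=
  hasDerivAt_sq_L1_norm_perturbation_general hzs_int hz_int hzs_ne
end
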